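/- arXiv:1205.5093 — 3 statements merged into one kernel-verified Lean document; each statement's English description precedes it below -/
import Mathlib

section
/- Let ω = (ω₁,ω₂,ω₃) ∈ ℝ³ with ωᵢ > 0 for each i, and suppose α = ω₂/ω₁ is irrational and β = ω₃/ω₁ is rational. Then there exists a constant C > 0 such that p(n,ω) ≤ C·n for every integer n ≥ 1. -/
/-!
The word read after a crossing time `t k` depends only on the fractional parts
`x i = fract (m i + t k * ω i)`: the next letter is the coordinate `i` whose next integer is reached
first, that is, the one minimising `(a i - x i) / ω i`, where `a i` is the next integer to be met
(counted from the start). Hence two positions are followed by the same `n` letters as soon as no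
pair of events `(i, a)`, `(i', b)` with `1 ≤ a, b ≤ n` is ordered differently at the two positions
(`words_agree`).

Since `ω 2 / ω 0` is a rational `a / b`, at a crossing of a face `0` or `2` the pair `(x 0, x 2)` is
determined by the letter and by the integer reached modulo `D = a * b` (`fract_eq_of_dvd`). With
`x 0` and `x 2` fixed, the order of the events depends only on the `2 * n` integers
`⌊x 1 + d⌋ - ⌊d⌋ ∈ {0, 1}`, where `d` runs over a fixed list of shifts. Each of them is monotone in
`x 1`, so they are all determined by their sum (`excess`), which takes at most `2 * n + 1` values.
So there are at most `3 * D * (2 * n + 1)` words following a letter `0` or `2`.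

Finally a factor starting with a run of the letter `1` is determined by the length of the run, which
is bounded in terms of `ω 1 / ω 0` (`exists_ne_one`), and by the word which follows. This gives a
linear bound, uniform in `m`.
-/

open Filter Topology

/-- Coordinate `i` of `m + t • ω` is an integer at time `t`. -/
def crossingAt (m ω : Fin 3 → ℝ) (t : ℝ) (i : Fin 3) : Prop :=
  ∃ k : ℤ, m i + t * ω i = (k : ℝ)

/-- `m` is admissible for `ω`: the ray `{m + tω : t > 0}` contains no point with
two or more integer coordinates. -/
def Admissible (m ω : Fin 3 → ℝ) : Prop :=
  ∀ t : ℝ, 0 < t → ∀ i j : Fin 3, crossingAt m ω t i → crossingAt m ω t j → i = j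

/-- `u` is the cutting sequence (billiard word) of the ray from `m` in direction `ω`:
there is an increasing enumeration `t` of all crossing times, and `u n` records the
index of the coordinate which is an integer at time `t n`. -/
def IsCuttingSeq (m ω : Fin 3 → ℝ) (u : ℕ → Fin 3) : Prop :=
  ∃ t : ℕ → ℝ, StrictMono t ∧ (∀ n, 0 < t n) ∧
    (∀ s : ℝ, 0 < s → ((∃ i, crossingAt m ω s i) ↔ ∃ n, t n = s)) ∧
    (∀ n, crossingAt m ω (t n) (u n))

/-- Factor complexity of an infinite word: number of distinct factors of length `n`. -/
noncomputable def complexity (u : ℕ → Fin 3) (n : ℕ) : ℕ :=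
  Set.ncard {w : Fin n → Fin 3 | ∃ k : ℕ, ∀ j : Fin n, w j = u (k + (j : ℕ))}

/-- `p(n, ω)`: supremum over admissible points of the complexity of the billiard word. -/
noncomputable def pDir (ω : Fin 3 → ℝ) (n : ℕ) : ℕ :=
  sSup {c : ℕ | ∃ m u, Admissible m ω ∧ IsCuttingSeq m ω u ∧ c = complexity u n}

/-- `s(n, ω) = p(n+1, ω) - p(n, ω)`. -/
noncomputable def sDir (ω : Fin 3 → ℝ) (n : ℕ) : ℤ :=
  (pDir ω (n + 1) : ℤ) - (pDir ω n : ℤ)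

/-- A point with at least two integer coordinates. -/
def IsCornerPt (x : Fin 3 → ℝ) : Prop :=
  ∃ i j : Fin 3, i ≠ j ∧ (∃ k : ℤ, x i = (k : ℝ)) ∧ (∃ k : ℤ, x j = (k : ℝ))

/-- `N(n, ω)`: the number (up to translation by `ℤ³`, i.e. counted with the starting
point normalized in `[0,1)³`) of open segments of direction `ω` whose endpoints both
have at least two integer coordinates, crossing exactly `n` integer coordinate
hyperplanes strictly between their endpoints. -/
noncomputable def NDiag (ω : Fin 3 → ℝ) (n : ℕ) : ℕ :=
  Set.ncard {pt : (Fin 3 → ℝ) × ℝ |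
    (∀ i, pt.1 i ∈ Set.Ico (0 : ℝ) 1) ∧ 0 < pt.2 ∧
    IsCornerPt pt.1 ∧ IsCornerPt (fun i => pt.1 i + pt.2 * ω i) ∧
    Set.ncard {q : Fin 3 × ℝ | 0 < q.2 ∧ q.2 < pt.2 ∧
      ∃ k : ℤ, pt.1 q.1 + q.2 * ω q.1 = (k : ℝ)} = n}

/-! ### Counting by keys -/

/-- If `w k` depends only on `key k`, and the keys lie in the finite set `S`, then `w` takes at most
`#S` values. -/
lemma ncard_range_le_of_key {W κ : Type*} [Nonempty W] (w : ℕ → W) (key : ℕ → κ) (S : Finset κ)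
    (hS : ∀ k, key k ∈ S) (h : ∀ k k', key k = key k' → w k = w k') :
    (Set.range w).ncard ≤ S.card := by
  classical
  have hsub : Set.range w ⊆ (Function.extend key w (fun _ => Classical.arbitrary W)) '' (S : Set κ) := by
    rintro _ ⟨k, rfl⟩
    refine ⟨key k, hS k, ?_⟩
    have hf : Function.FactorsThrough w key := fun a b hab => h a b hab
    exact hf.extend_apply _ k
  calc (Set.range w).ncard ≤ _ := Set.ncard_le_ncard hsub (S.finite_toSet.image _)
    _ ≤ (S : Set κ).ncard := Set.ncard_image_le S.finite_toSet
    _ = S.card := Set.ncard_coe_finset S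

/-! ### Dynamics of the crossings -/

/-- `t` enumerates the crossing times of the ray from the admissible point `m`, and `u` is the word
of the crossed faces. -/
structure Crossings (m ω : Fin 3 → ℝ) (u : ℕ → Fin 3) (t : ℕ → ℝ) : Prop where
  pos : ∀ i, 0 < ω i
  adm : Admissible m ω
  mono : StrictMono t
  tpos : ∀ n, 0 < t n
  all : ∀ s : ℝ, 0 < s → ((∃ i, crossingAt m ω s i) ↔ ∃ n, t n = s)
  cross : ∀ n, crossingAt m ω (t n) (u n)

/-- Integer part of coordinate `i` at the `k`-th crossing time. -/
noncomputable def fl (m ω : Fin 3 → ℝ) (t : ℕ → ℝ) (i : Fin 3) (k : ℕ) : ℤ :=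
  ⌊m i + t k * ω i⌋

/-- Fractional part of coordinate `i` at the `k`-th crossing time. -/
noncomputable def fr (m ω : Fin 3 → ℝ) (t : ℕ → ℝ) (i : Fin 3) (k : ℕ) : ℝ :=
  Int.fract (m i + t k * ω i)

lemma fl_add_fr (m ω : Fin 3 → ℝ) (t : ℕ → ℝ) (i : Fin 3) (k : ℕ) :
    (fl m ω t i k : ℝ) + fr m ω t i k = m i + t k * ω i :=
  Int.floor_add_fract _

/-- The time at which coordinate `i` next reaches an integer after `t k`. -/
noncomputable def nextTime (m ω : Fin 3 → ℝ) (t : ℕ → ℝ) (i : Fin 3) (k : ℕ) : ℝ :=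
  ((fl m ω t i k : ℝ) + 1 - m i) / ω i

namespace Crossings

variable {m ω : Fin 3 → ℝ} {u : ℕ → Fin 3} {t : ℕ → ℝ}

lemma value_nextTime (h : Crossings m ω u t) (i : Fin 3) (k : ℕ) :
    m i + nextTime m ω t i k * ω i = ((fl m ω t i k + 1 : ℤ) : ℝ) := by
  have := (h.pos i).ne'
  unfold nextTime
  field_simp
  push_cast
  ring

lemma lt_nextTime (h : Crossings m ω u t) (i : Fin 3) (k : ℕ) : t k < nextTime m ω t i k := by
  have h1 := h.value_nextTime i k
  have h2 : m i + t k * ω i < (fl m ω t i k : ℝ) + 1 := Int.lt_floor_add_one _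
  push_cast at h1
  refine lt_of_mul_lt_mul_right ?_ (h.pos i).le
  linarith

lemma crossing_nextTime (h : Crossings m ω u t) (i : Fin 3) (k : ℕ) :
    crossingAt m ω (nextTime m ω t i k) i :=
  ⟨_, h.value_nextTime i k⟩

lemma succ_le_nextTime (h : Crossings m ω u t) (i : Fin 3) (k : ℕ) :
    t (k + 1) ≤ nextTime m ω t i k := by
  have hlt := h.lt_nextTime i k
  obtain ⟨n, hn⟩ := (h.all _ ((h.tpos k).trans hlt)).1 ⟨i, h.crossing_nextTime i k⟩
  rw [← hn] at hlt ⊢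
  exact h.mono.monotone (h.mono.lt_iff_lt.1 hlt)

lemma succ_eq_nextTime (h : Crossings m ω u t) (k : ℕ) :
    t (k + 1) = nextTime m ω t (u (k + 1)) k := by
  refine le_antisymm (h.succ_le_nextTime _ k) ?_
  obtain ⟨K, hK⟩ := h.cross (k + 1)
  have hw := h.pos (u (k + 1))
  have h1 := h.value_nextTime (u (k + 1)) k
  have hlt : t k * ω (u (k + 1)) < t (k + 1) * ω (u (k + 1)) :=
    mul_lt_mul_of_pos_right (h.mono k.lt_succ_self) hw
  have h2 : (fl m ω t (u (k + 1)) k : ℝ) ≤ m (u (k + 1)) + t k * ω (u (k + 1)) := Int.floor_le _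
  have h3 : (fl m ω t (u (k + 1)) k : ℝ) < (K : ℝ) := by linarith
  have h4 : fl m ω t (u (k + 1)) k + 1 ≤ K := by exact_mod_cast h3
  have h5 : ((fl m ω t (u (k + 1)) k + 1 : ℤ) : ℝ) ≤ (K : ℝ) := by exact_mod_cast h4
  refine le_of_mul_le_mul_right ?_ hw
  linarith

lemma succ_lt_nextTime (h : Crossings m ω u t) {i : Fin 3} {k : ℕ} (hi : i ≠ u (k + 1)) :
    t (k + 1) < nextTime m ω t i k := by
  refine lt_of_le_of_ne (h.succ_le_nextTime i k) fun he => hi ?_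
  refine h.adm _ (h.tpos (k + 1)) _ _ ?_ (h.cross (k + 1))
  rw [he]
  exact h.crossing_nextTime i k

lemma fl_succ (h : Crossings m ω u t) (i : Fin 3) (k : ℕ) :
    fl m ω t i (k + 1) = fl m ω t i k + if i = u (k + 1) then 1 else 0 := by
  have hv := h.value_nextTime i k
  split_ifs with hi
  · have he : t (k + 1) = nextTime m ω t i k := by rw [hi]; exact h.succ_eq_nextTime k
    rw [← he] at hv
    rw [fl, hv, Int.floor_intCast]
  · have hlt := mul_lt_mul_of_pos_right (h.succ_lt_nextTime hi) (h.pos i)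
    have hlt2 := mul_lt_mul_of_pos_right (h.mono k.lt_succ_self) (h.pos i)
    have h2 : (fl m ω t i k : ℝ) ≤ m i + t k * ω i := Int.floor_le _
    push_cast at hv
    rw [add_zero, fl, Int.floor_eq_iff]
    constructor <;> linarith

/-- If no two events among the first `n` of each coordinate are ordered differently after `t k` and
after `t k'`, then the same `n` letters follow. -/
lemma words_agree (h : Crossings m ω u t) (n k k' : ℕ)
    (H : ∀ i i' : Fin 3, i ≠ i' → ∀ a b : ℤ, 1 ≤ a → a ≤ n → 1 ≤ b → b ≤ n →
      ((a : ℝ) - fr m ω t i k) / ω i < (b - fr m ω t i' k) / ω i' →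
      ((b : ℝ) - fr m ω t i' k') / ω i' < (a - fr m ω t i k') / ω i → False) :
    ∀ l < n, u (k + 1 + l) = u (k' + 1 + l) := by
  -- The event times counted from `t k` are `(a - x i) / ω i`.
  have key : ∀ (i : Fin 3) (k j : ℕ), nextTime m ω t i (k + j) =
      t k + (((fl m ω t i (k + j) - fl m ω t i k + 1 : ℤ) : ℝ) - fr m ω t i k) / ω i := by
    intro i k j
    have h1 := (h.pos i).ne'
    have h2 := fl_add_fr m ω t i k
    unfold nextTime
    field_simp
    push_cast
    linarith
  have main : ∀ j ≤ n, (∀ l < j, u (k + 1 + l) = u (k' + 1 + l)) ∧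
      ∀ i, fl m ω t i (k + j) - fl m ω t i k = fl m ω t i (k' + j) - fl m ω t i k' ∧
        0 ≤ fl m ω t i (k + j) - fl m ω t i k ∧ fl m ω t i (k + j) - fl m ω t i k ≤ j := by
    intro j
    induction j with
    | zero => intro _; simp
    | succ j ih =>
      intro hj
      obtain ⟨ih1, ih2⟩ := ih (by omega)
      have hu : u (k + j + 1) = u (k' + j + 1) := by
        by_contra hne
        have a1 := h.succ_lt_nextTime (k := k + j) (Ne.symm hne)
        rw [h.succ_eq_nextTime (k + j), key, key] at a1
        have a2 := h.succ_lt_nextTime (k := k' + j) hne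
        rw [h.succ_eq_nextTime (k' + j), key, key, ← (ih2 _).1, ← (ih2 _).1] at a2
        have b1 := ih2 (u (k + j + 1))
        have b2 := ih2 (u (k' + j + 1))
        exact H _ _ hne _ _ (by omega) (by omega) (by omega) (by omega)
          (lt_of_add_lt_add_left a1) (lt_of_add_lt_add_left a2)
      refine ⟨fun l hl => ?_, fun i => ?_⟩
      · rcases Nat.lt_succ_iff_lt_or_eq.1 hl with hl | rfl
        · exact ih1 l hl
        · rw [add_right_comm, hu, add_right_comm]
      · have c1 := h.fl_succ i (k + j)
        have c2 := h.fl_succ i (k' + j)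
        rw [← hu] at c2
        have c3 := ih2 i
        rw [← add_assoc, ← add_assoc]
        push_cast
        split_ifs at c1 c2 <;> omega
  exact (main n le_rfl).1

/-- From any position, the first letter other than `1` is at distance at most `A`, as soon as
`A > ω 1 / ω 0 + 1`. -/
lemma exists_ne_one (h : Crossings m ω u t) (A : ℕ) (hA : ω 1 / ω 0 + 1 < A) (k : ℕ) :
    ∃ j ≤ A, u (k + j) ≠ 1 ∧ ∀ l < j, u (k + l) = 1 := by
  classical
  suffices hex : ∃ j ≤ A, u (k + j) ≠ 1 by
    obtain ⟨j, hj, hne⟩ := hex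
    have hP : ∃ j, u (k + j) ≠ 1 := ⟨j, hne⟩
    exact ⟨Nat.find hP, (Nat.find_min' hP hne).trans hj, Nat.find_spec hP,
      fun l hl => not_not.1 (Nat.find_min hP hl)⟩
  by_contra! hcon
  have hN : ∀ j ≤ A, fl m ω t 1 (k + j) = fl m ω t 1 k + j ∧ fl m ω t 0 (k + j) = fl m ω t 0 k := by
    intro j
    induction j with
    | zero => intro _; simp
    | succ j ih =>
      intro hj
      obtain ⟨i1, i2⟩ := ih (by omega)
      have hu := hcon (j + 1) hj
      rw [← add_assoc] at hu
      have c1 := h.fl_succ 1 (k + j)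
      have c0 := h.fl_succ 0 (k + j)
      rw [hu] at c1 c0
      rw [← add_assoc, c1, c0, i1, i2]
      simp [add_assoc]
  obtain ⟨h1, h0⟩ := hN A le_rfl
  have e1 := fl_add_fr m ω t 1 k
  have e1' := fl_add_fr m ω t 1 (k + A)
  have e0 := fl_add_fr m ω t 0 k
  have e0' := fl_add_fr m ω t 0 (k + A)
  rw [h1] at e1'
  rw [h0] at e0'
  push_cast at e1'
  have f1 : fr m ω t 1 k < 1 := Int.fract_lt_one _
  have f2 : 0 ≤ fr m ω t 1 (k + A) := Int.fract_nonneg _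
  have f3 : fr m ω t 0 (k + A) < 1 := Int.fract_lt_one _
  have f4 : 0 ≤ fr m ω t 0 k := Int.fract_nonneg _
  have g1 : (A : ℝ) - 1 < (t (k + A) - t k) * ω 1 := by linarith
  have g0 : (t (k + A) - t k) * ω 0 < 1 := by linarith
  have p0 := h.pos 0
  have p1 := h.pos 1
  have g2 : t (k + A) - t k < 1 / ω 0 := by rwa [lt_div_iff₀ p0]
  have g3 := mul_lt_mul_of_pos_right g2 p1
  have g4 : 1 / ω 0 * ω 1 = ω 1 / ω 0 := by ring
  linarith

lemma value_eq_fl (h : Crossings m ω u t) (k : ℕ) :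
    m (u k) + t k * ω (u k) = (fl m ω t (u k) k : ℝ) := by
  obtain ⟨K, hK⟩ := h.cross k
  rw [fl, hK, Int.floor_intCast]

/-- At a crossing of a face `0` or `2`, the fractional parts of the coordinates `0` and `2` are
determined by the letter and by the integer reached modulo `a * b`, where `ω 2 / ω 0 = a / b`. -/
lemma fract_eq_of_dvd (h : Crossings m ω u t) {a b : ℕ} (ha : 0 < a) (hb : 0 < b)
    (hab : ω 2 * b = a * ω 0) {k k' : ℕ} (hu : u k = u k') (hne : u k ≠ 1)
    (hd : ((a * b : ℕ) : ℤ) ∣ fl m ω t (u k) k - fl m ω t (u k') k') :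
    fr m ω t 0 k = fr m ω t 0 k' ∧ fr m ω t 2 k = fr m ω t 2 k' := by
  obtain ⟨z, hz⟩ := hd
  have hz' : (fl m ω t (u k) k : ℝ) - fl m ω t (u k') k' = (a : ℝ) * b * z := by
    exact_mod_cast hz
  have v := h.value_eq_fl k
  have v' := h.value_eq_fl k'
  have hdiff : (t k - t k') * ω (u k) = (a : ℝ) * b * z := by
    rw [← hz', ← v, ← v', hu]; ring
  have ha' : (a : ℝ) ≠ 0 := by positivity
  have hb' : (b : ℝ) ≠ 0 := by positivity
  have hcases : u k = 0 ∨ u k = 2 := by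
    generalize u k = i at hne
    fin_cases i <;> simp_all
  unfold fr
  rw [Int.fract_eq_fract, Int.fract_eq_fract]
  rcases hcases with hi | hi <;> rw [hi] at hdiff
  · refine ⟨⟨a * b * z, ?_⟩, ⟨a * a * z, ?_⟩⟩
    · push_cast; linarith
    · apply mul_right_cancel₀ hb'
      push_cast
      linear_combination (t k - t k') * hab + a * hdiff
  · refine ⟨⟨b * b * z, ?_⟩, ⟨a * b * z, ?_⟩⟩
    · apply mul_right_cancel₀ ha'
      push_cast
      linear_combination (-(t k - t k')) * hab + b * hdiff
    · push_cast; linarith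

end Crossings

/-! ### Dependence on the fractional part of coordinate `1` -/

/-- The total number of integers passed over when the shifts `(a + 1 - x) * ω 1 / ω i`, for `a < n`
and `(i, x) = (0, x0), (2, x2)`, are increased by `y`. Here `x0`, `x2` and `y` stand for the
fractional parts of the coordinates `0`, `2` and `1`. -/
noncomputable def excess (ω : Fin 3 → ℝ) (n : ℕ) (x0 x2 y : ℝ) : ℤ :=
  ∑ a ∈ Finset.range n,
    ((⌊y + ((a : ℝ) + 1 - x0) * ω 1 / ω 0⌋ - ⌊((a : ℝ) + 1 - x0) * ω 1 / ω 0⌋) +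
     (⌊y + ((a : ℝ) + 1 - x2) * ω 1 / ω 2⌋ - ⌊((a : ℝ) + 1 - x2) * ω 1 / ω 2⌋))

lemma floor_add_sub_mem {y : ℝ} (h0 : 0 ≤ y) (h1 : y < 1) (d : ℝ) :
    0 ≤ ⌊y + d⌋ - ⌊d⌋ ∧ ⌊y + d⌋ - ⌊d⌋ ≤ 1 := by
  have h2 : ⌊d⌋ ≤ ⌊y + d⌋ := Int.floor_mono (by linarith)
  have h3 : ⌊y + d⌋ ≤ ⌊d + 1⌋ := Int.floor_mono (by linarith)
  rw [Int.floor_add_one] at h3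
  omega

lemma excess_mem (ω : Fin 3 → ℝ) (n : ℕ) (x0 x2 : ℝ) {y : ℝ} (h0 : 0 ≤ y) (h1 : y < 1) :
    0 ≤ excess ω n x0 x2 y ∧ excess ω n x0 x2 y ≤ 2 * n := by
  constructor
  · refine Finset.sum_nonneg fun a _ => ?_
    have p := (floor_add_sub_mem h0 h1 (((a : ℝ) + 1 - x0) * ω 1 / ω 0)).1
    have q := (floor_add_sub_mem h0 h1 (((a : ℝ) + 1 - x2) * ω 1 / ω 2)).1
    omega
  · have : excess ω n x0 x2 y ≤ ∑ a ∈ Finset.range n, (2 : ℤ) := by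
      refine Finset.sum_le_sum fun a _ => ?_
      have p := (floor_add_sub_mem h0 h1 (((a : ℝ) + 1 - x0) * ω 1 / ω 0)).2
      have q := (floor_add_sub_mem h0 h1 (((a : ℝ) + 1 - x2) * ω 1 / ω 2)).2
      omega
    simpa [mul_comm] using this

/-- Each term of `excess` is monotone in `y`, so the value of the sum determines all terms. -/
lemma floors_eq_of_excess_eq (ω : Fin 3 → ℝ) (n : ℕ) (x0 x2 y y' : ℝ)
    (he : excess ω n x0 x2 y = excess ω n x0 x2 y') :
    ∀ a < n, ⌊y + ((a : ℝ) + 1 - x0) * ω 1 / ω 0⌋ = ⌊y' + ((a : ℝ) + 1 - x0) * ω 1 / ω 0⌋ ∧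
      ⌊y + ((a : ℝ) + 1 - x2) * ω 1 / ω 2⌋ = ⌊y' + ((a : ℝ) + 1 - x2) * ω 1 / ω 2⌋ := by
  wlog hy : y ≤ y' generalizing y y'
  · intro a ha
    have := this y' y he.symm (le_of_not_ge hy) a ha
    exact ⟨this.1.symm, this.2.symm⟩
  have hm : ∀ d : ℝ, ⌊y + d⌋ ≤ ⌊y' + d⌋ := fun d => Int.floor_mono (by linarith)
  intro a ha
  have := (Finset.sum_eq_sum_iff_of_le (fun a _ => by
    have p := hm (((a : ℝ) + 1 - x0) * ω 1 / ω 0)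
    have q := hm (((a : ℝ) + 1 - x2) * ω 1 / ω 2)
    omega)).1 he a (Finset.mem_range.2 ha)
  have p := hm (((a : ℝ) + 1 - x0) * ω 1 / ω 0)
  have q := hm (((a : ℝ) + 1 - x2) * ω 1 / ω 2)
  omega

/-- If `⌊y + d⌋` is the same for `y` and `y'`, where `d = (a - x) * v / w`, then the events
`(b - y) / v` and `(a - x) / w` cannot be ordered in one way for `y` and in the other for `y'`. -/
lemma order_contra {x y y' v w : ℝ} (hv : 0 < v) {a b : ℤ}
    (he : ⌊y + ((a : ℝ) - x) * v / w⌋ = ⌊y' + ((a : ℝ) - x) * v / w⌋)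
    (h1 : ((b : ℝ) - y) / v < (a - x) / w) (h2 : ((a : ℝ) - x) / w < (b - y') / v) : False := by
  have e : (((a : ℝ) - x) / w) * v = ((a : ℝ) - x) * v / w := by ring
  rw [div_lt_iff₀ hv, e] at h1
  rw [lt_div_iff₀ hv, e] at h2
  have h3 : b ≤ ⌊y + ((a : ℝ) - x) * v / w⌋ := Int.le_floor.2 (by linarith)
  have h4 : ⌊y' + ((a : ℝ) - x) * v / w⌋ < b := Int.floor_lt.2 (by linarith)
  omega

/-! ### The linear bound -/

namespace Crossings

variable {m ω : Fin 3 → ℝ} {u : ℕ → Fin 3} {t : ℕ → ℝ}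

/-- After a letter `0` or `2`, the next `n` letters are determined by this letter, the integer reached
modulo `a * b`, and the value of `excess`. -/
lemma words_agree_of_key (h : Crossings m ω u t) {a b : ℕ} (ha : 0 < a) (hb : 0 < b)
    (hab : ω 2 * b = a * ω 0) {n k k' : ℕ} (hu : u k = u k') (hne : u k ≠ 1)
    (hd : ((a * b : ℕ) : ℤ) ∣ fl m ω t (u k) k - fl m ω t (u k') k')
    (he : excess ω n (fr m ω t 0 k) (fr m ω t 2 k) (fr m ω t 1 k) =
      excess ω n (fr m ω t 0 k') (fr m ω t 2 k') (fr m ω t 1 k')) :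
    ∀ l ≤ n, u (k + l) = u (k' + l) := by
  obtain ⟨e0, e2⟩ := h.fract_eq_of_dvd ha hb hab hu hne hd
  rw [← e0, ← e2] at he
  have hf := floors_eq_of_excess_eq ω n _ _ _ _ he
  have hf' : ∀ c : ℤ, 1 ≤ c → c ≤ n →
      ⌊fr m ω t 1 k + ((c : ℝ) - fr m ω t 0 k) * ω 1 / ω 0⌋ =
        ⌊fr m ω t 1 k' + ((c : ℝ) - fr m ω t 0 k) * ω 1 / ω 0⌋ ∧
      ⌊fr m ω t 1 k + ((c : ℝ) - fr m ω t 2 k) * ω 1 / ω 2⌋ =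
        ⌊fr m ω t 1 k' + ((c : ℝ) - fr m ω t 2 k) * ω 1 / ω 2⌋ := by
    intro c h1 h2
    obtain ⟨d, rfl⟩ : ∃ d : ℕ, c = d + 1 := ⟨(c - 1).toNat, by omega⟩
    have := hf d (by omega)
    push_cast
    exact this
  have p := h.pos
  have key := h.words_agree n k k' (by
    intro i i' hii c d hc hc' hd hd' h1 h2
    have fc := hf' c hc hc'
    have fd := hf' d hd hd'
    fin_cases i <;> fin_cases i' <;>
      simp only [Fin.zero_eta, Fin.mk_one, Fin.reduceFinMk, ne_eq, not_true_eq_false] at hii h1 h2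
    · rw [← e0] at h2
      exact order_contra (p 1) fc.1.symm h2 h1
    · rw [← e0, ← e2] at h2
      exact lt_asymm h1 h2
    · rw [← e0] at h2
      exact order_contra (p 1) fd.1 h1 h2
    · rw [← e2] at h2
      exact order_contra (p 1) fd.2 h1 h2
    · rw [← e0, ← e2] at h2
      exact lt_asymm h1 h2
    · rw [← e2] at h2
      exact order_contra (p 1) fc.2.symm h2 h1)
  intro l hl
  cases l with
  | zero => simpa using hu
  | succ l =>
    have := key l (by omega)
    rwa [add_assoc, add_assoc, add_comm 1 l] at this

lemma complexity_le (h : Crossings m ω u t) {a b : ℕ} (ha : 0 < a) (hb : 0 < b)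
    (hab : ω 2 * b = a * ω 0) (A : ℕ) (hA : ω 1 / ω 0 + 1 < A) (n : ℕ) :
    complexity u n ≤ (A + 1) * (3 * ((a * b) * (2 * n + 1))) := by
  choose r hrA hr hr1 using h.exists_ne_one A hA
  have hD : (0 : ℤ) < ((a * b : ℕ) : ℤ) := by positivity
  -- `r k` is the length of the run of `1`s at `k`; the remaining entries of the key describe the
  -- position `k + r k`, which carries a letter `0` or `2`.
  let key : ℕ → ℕ × Fin 3 × ℕ × ℕ := fun k =>
    (r k, u (k + r k),
      (fl m ω t (u (k + r k)) (k + r k) % ((a * b : ℕ) : ℤ)).toNat,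
      (excess ω n (fr m ω t 0 (k + r k)) (fr m ω t 2 (k + r k)) (fr m ω t 1 (k + r k))).toNat)
  let S : Finset (ℕ × Fin 3 × ℕ × ℕ) :=
    Finset.range (A + 1) ×ˢ (Finset.univ ×ˢ (Finset.range (a * b) ×ˢ Finset.range (2 * n + 1)))
  have hex := fun k => excess_mem ω n (fr m ω t 0 k) (fr m ω t 2 k)
    (y := fr m ω t 1 k) (Int.fract_nonneg _) (Int.fract_lt_one _)
  have hset : {w : Fin n → Fin 3 | ∃ k : ℕ, ∀ j : Fin n, w j = u (k + (j : ℕ))} =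
      Set.range (fun k : ℕ => fun j : Fin n => u (k + (j : ℕ))) := by
    ext w
    constructor
    · rintro ⟨k, hk⟩
      exact ⟨k, funext fun j => (hk j).symm⟩
    · rintro ⟨k, rfl⟩
      exact ⟨k, fun j => rfl⟩
  have hcard : S.card = (A + 1) * (3 * ((a * b) * (2 * n + 1))) := by
    simp [S, Finset.card_product]
  rw [complexity, hset, ← hcard]
  refine ncard_range_le_of_key _ key S (fun k => ?_) (fun k k' hk => ?_)
  · have h1 := Int.emod_nonneg (fl m ω t (u (k + r k)) (k + r k)) hD.ne'
    have h2 := Int.emod_lt_of_pos (fl m ω t (u (k + r k)) (k + r k)) hD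
    have h3 := hex (k + r k)
    have h4 := hrA k
    simp only [S, key, Finset.mem_product, Finset.mem_range, Finset.mem_univ, true_and]
    refine ⟨by omega, by omega, by omega⟩
  · simp only [key, Prod.mk.injEq] at hk
    obtain ⟨k1, k2, k3, k4⟩ := hk
    have h1 := Int.emod_nonneg (fl m ω t (u (k + r k)) (k + r k)) hD.ne'
    have h1' := Int.emod_nonneg (fl m ω t (u (k' + r k')) (k' + r k')) hD.ne'
    have h3 := hex (k + r k)
    have h3' := hex (k' + r k')
    have hdvd := Int.ModEq.dvd (show Int.ModEq _ _ _ from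
      (by omega : fl m ω t (u (k' + r k')) (k' + r k') % ((a * b : ℕ) : ℤ) =
        fl m ω t (u (k + r k)) (k + r k) % ((a * b : ℕ) : ℤ)))
    have hw := h.words_agree_of_key (n := n) ha hb hab k2 (hr k) hdvd (by omega)
    funext j
    have hj := j.2
    by_cases hjr : (j : ℕ) < r k
    · change u (k + j) = u (k' + j)
      rw [hr1 k j hjr, hr1 k' j (k1 ▸ hjr)]
    · obtain ⟨l, hl⟩ : ∃ l, (j : ℕ) = r k + l := ⟨j - r k, by omega⟩
      have := hw l (by omega)
      rw [← k1, add_assoc, add_assoc, ← hl] at this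
      exact this

end Crossings

/-- Case (2): if `α = ω₂/ω₁` is irrational and `β = ω₃/ω₁` is rational, then the
complexity is sub-linear: `p(n, ω) ≤ C n`. -/
theorem stmt1 (ω : Fin 3 → ℝ) (hpos : ∀ i, 0 < ω i)
    (hα : Irrational (ω 1 / ω 0)) (hβ : ∃ q : ℚ, ω 2 / ω 0 = (q : ℝ)) :
    ∃ C : ℝ, 0 < C ∧ ∀ n : ℕ, 1 ≤ n → (pDir ω n : ℝ) ≤ C * (n : ℝ) := by
  obtain ⟨q, hq⟩ := hβ
  have p0 := hpos 0
  have hqpos : 0 < q := by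
    have : (0 : ℝ) < q := hq ▸ div_pos (hpos 2) p0
    exact_mod_cast this
  obtain ⟨a, ha⟩ : ∃ a : ℕ, q.num = a := ⟨q.num.toNat, by have := Rat.num_pos.2 hqpos; omega⟩
  have ha0 : 0 < a := by have := Rat.num_pos.2 hqpos; omega
  have hb0 : 0 < q.den := q.den_pos
  have hab : ω 2 * q.den = a * ω 0 := by
    have hb : (q.den : ℝ) ≠ 0 := by positivity
    rw [Rat.cast_def, ha, div_eq_div_iff p0.ne' hb] at hq
    exact_mod_cast hq
  obtain ⟨A, hA⟩ := exists_nat_gt (ω 1 / ω 0 + 1)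
  refine ⟨(A + 1) * (3 * ((a * q.den) * 3)), by positivity, fun n hn => ?_⟩
  have hle : pDir ω n ≤ (A + 1) * (3 * ((a * q.den) * (2 * n + 1))) := by
    refine csSup_le' ?_
    rintro c ⟨m, u, hadm, ⟨t, ht1, ht2, ht3, ht4⟩, rfl⟩
    exact Crossings.complexity_le ⟨hpos, hadm, ht1, ht2, ht3, ht4⟩ ha0 hb0 hab A hA n
  have hle2 : pDir ω n ≤ (A + 1) * (3 * ((a * q.den) * 3)) * n := by
    refine hle.trans ?_
    have : 2 * n + 1 ≤ 3 * n := by omega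
    calc (A + 1) * (3 * ((a * q.den) * (2 * n + 1)))
        ≤ (A + 1) * (3 * ((a * q.den) * (3 * n))) := by gcongr
      _ = _ := by ring
  exact_mod_cast hle2
end

section
/- Let ω = (ω₁,ω₂,ω₃) ∈ ℝ³ with ωᵢ > 0 for each i, and suppose α = ω₂/ω₁ and β = ω₃/ω₁ are both irrational but 1, α, β are linearly dependent over ℚ. Then there exists a constant C > 0 such that p(n,ω) ≤ C·n for every integer n ≥ 1. -/
/-! The dependence of `1, α, β` yields an integer vector `q` with `q · ω = 0` and `q 2 ≠ 0`, the
latter because `α` is irrational. For a point `x = m + tω` of the orbit put `y i = ⌈x i⌉ - x i`, and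
let `τ i = y i / ω i` be the waiting time until coordinate `i` is next an integer. The `a`-th
letter `i` of the word read from `x` is preceded by exactly
`gap ω y i j a = ⌈a ω j / ω i + ω j (τ i - τ j)⌉` letters `j`, so its position is the sum of these
integers over `j` (`sum_ceil_add`, `index_eq_sum_gap`). Hence a factor of length `n` is determined
by the `gap ω y i j a` with `a < n` (`word_eq`), each of which is a monotone function of the
difference `τ i - τ j` and stays at bounded distance from `a ω j / ω i` (`abs_gap_sub_le`).

Since `q · x = q · m` along the orbit, `q · y` equals the integer `q · ⌈x⌉` minus the constant
`q · m`, so it takes boundedly many values. For orbit points sharing this value all differences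
`τ i - τ j` are affine functions of the single parameter `τ 1 - τ 0`, with slopes depending on
`q` and `ω` only. After fixing signs according to these slopes, the `9 n` integers
`± gap ω y i j a` are simultaneously monotone in that parameter, so they are all determined by
their sum (`gap_eq_of_key_eq`). The sum ranges over an interval of length `O(n)`, so there are
`O(n)` factors, uniformly in `m`. -/

open Filter Topology

/-! ### Positions of letters in a billiard word -/

/-- Number of integer values of coordinate `j` met strictly before the `a`-th integer value of
coordinate `i` (counted from `a = 0`, present time included), when coordinate `l` has to travel
the distance `y l ∈ [0, 1)` to reach its next integer. -/
noncomputable def gap (ω y : Fin 3 → ℝ) (i j : Fin 3) (a : ℕ) : ℤ :=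
  ⌈(a + y i) / ω i * ω j - y j⌉

/-- Distance from each coordinate of `m + tω` up to the next integer. -/
noncomputable def toNext (m ω : Fin 3 → ℝ) (t : ℝ) (i : Fin 3) : ℝ :=
  ⌈m i + t * ω i⌉ - (m i + t * ω i)

lemma toNext_nonneg (m ω : Fin 3 → ℝ) (t : ℝ) (i : Fin 3) : 0 ≤ toNext m ω t i :=
  sub_nonneg.2 (Int.le_ceil _)

lemma toNext_lt_one (m ω : Fin 3 → ℝ) (t : ℝ) (i : Fin 3) : toNext m ω t i < 1 := by
  have := Int.ceil_lt_add_one (m i + t * ω i)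
  unfold toNext; linarith

/-- The sum of the ceilings of the coordinates increases by exactly one from each crossing time
to the next, because exactly one coordinate is an integer at a crossing time and none is in
between. -/
lemma sum_ceil_succ {m ω : Fin 3 → ℝ} (hpos : ∀ i, 0 < ω i) (hm : Admissible m ω)
    {u : ℕ → Fin 3} {t : ℕ → ℝ} (ht : StrictMono t) (ht0 : ∀ n, 0 < t n)
    (hc : ∀ s : ℝ, 0 < s → ((∃ i, crossingAt m ω s i) ↔ ∃ n, t n = s))
    (hu : ∀ n, crossingAt m ω (t n) (u n)) (l : ℕ) :
    ∑ j, ⌈m j + t (l + 1) * ω j⌉ = ∑ j, ⌈m j + t l * ω j⌉ + 1 := by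
  have hlt : t l < t (l + 1) := ht (Nat.lt_succ_self l)
  have key : ∀ j, ⌈m j + t (l + 1) * ω j⌉ = ⌊m j + t l * ω j⌋ + 1 := by
    intro j
    have hω := hpos j
    rw [Int.ceil_eq_iff]
    push_cast
    refine ⟨?_, ?_⟩
    · have := Int.floor_le (m j + t l * ω j)
      nlinarith
    · -- otherwise the integer `⌊m j + t l * ω j⌋ + 1` is crossed strictly between the two times
      by_contra! h
      have h1 := Int.lt_floor_add_one (m j + t l * ω j)
      set z : ℤ := ⌊m j + t l * ω j⌋ + 1 with hz
      have hzr : (z : ℝ) = (⌊m j + t l * ω j⌋ : ℝ) + 1 := by simp [hz]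
      have hs1 : t l < (z - m j) / ω j := by rw [lt_div_iff₀ hω]; linarith
      have hs2 : (z - m j) / ω j < t (l + 1) := by rw [div_lt_iff₀ hω]; linarith
      obtain ⟨n, hn⟩ := (hc _ ((ht0 l).trans hs1)).1
        ⟨j, z, by rw [div_mul_cancel₀ _ hω.ne']; ring⟩
      rw [← hn] at hs1 hs2
      have := ht.lt_iff_lt.1 hs1
      have := ht.lt_iff_lt.1 hs2
      omega
  have key2 : ∀ j, ⌊m j + t l * ω j⌋ + 1 = ⌈m j + t l * ω j⌉ + if j = u l then 1 else 0 := by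
    intro j
    split_ifs with h
    · obtain ⟨z, hz⟩ := hu l
      rw [h, hz]; simp
    · have hnot : ¬ ∃ z : ℤ, m j + t l * ω j = z := fun hz => h (hm _ (ht0 l) _ _ hz (hu l))
      have : (⌊m j + t l * ω j⌋ : ℝ) < m j + t l * ω j :=
        lt_of_le_of_ne (Int.floor_le _) fun hh => hnot ⟨_, hh.symm⟩
      rw [add_zero, eq_comm, Int.ceil_eq_iff]
      push_cast
      exact ⟨by linarith, (Int.lt_floor_add_one _).le⟩
  simp_rw [key, key2, Finset.sum_add_distrib]
  simp

lemma sum_ceil_add {m ω : Fin 3 → ℝ} (hpos : ∀ i, 0 < ω i) (hm : Admissible m ω)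
    {u : ℕ → Fin 3} {t : ℕ → ℝ} (ht : StrictMono t) (ht0 : ∀ n, 0 < t n)
    (hc : ∀ s : ℝ, 0 < s → ((∃ i, crossingAt m ω s i) ↔ ∃ n, t n = s))
    (hu : ∀ n, crossingAt m ω (t n) (u n)) (k r : ℕ) :
    ∑ j, ⌈m j + t (k + r) * ω j⌉ = ∑ j, ⌈m j + t k * ω j⌉ + r := by
  induction r with
  | zero => simp
  | succ r ih =>
    rw [← add_assoc, sum_ceil_succ hpos hm ht ht0 hc hu, ih]
    push_cast; ring

/-- If coordinate `i` takes its `a`-th integer value after time `t k` at the time `t (k + r)`, then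
`r` is the total number of crossings of the three coordinates in between. -/
lemma index_eq_sum_gap {m ω : Fin 3 → ℝ} (hpos : ∀ i, 0 < ω i) (hm : Admissible m ω)
    {u : ℕ → Fin 3} {t : ℕ → ℝ} (ht : StrictMono t) (ht0 : ∀ n, 0 < t n)
    (hc : ∀ s : ℝ, 0 < s → ((∃ i, crossingAt m ω s i) ↔ ∃ n, t n = s))
    (hu : ∀ n, crossingAt m ω (t n) (u n)) (k r a : ℕ) (i : Fin 3)
    (h : m i + t (k + r) * ω i = ⌈m i + t k * ω i⌉ + a) :
    (r : ℤ) = ∑ j, gap ω (toNext m ω (t k)) i j a := by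
  have h1 : (a + toNext m ω (t k) i) / ω i = t (k + r) - t k := by
    rw [div_eq_iff (hpos i).ne', toNext]; linarith
  have h2 : ∀ j, gap ω (toNext m ω (t k)) i j a
      = ⌈m j + t (k + r) * ω j⌉ - ⌈m j + t k * ω j⌉ := by
    intro j
    rw [gap, h1, toNext, ← Int.ceil_sub_intCast]
    congr 1; ring
  simp_rw [h2, Finset.sum_sub_distrib, sum_ceil_add hpos hm ht ht0 hc hu k r]
  ring

/-- The integers `gap` with `a < n` determine the factor of length `n` read from time `t k`. -/
lemma word_eq {m ω : Fin 3 → ℝ} (hpos : ∀ i, 0 < ω i) (hm : Admissible m ω)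
    {u : ℕ → Fin 3} {t : ℕ → ℝ} (ht : StrictMono t) (ht0 : ∀ n, 0 < t n)
    (hc : ∀ s : ℝ, 0 < s → ((∃ i, crossingAt m ω s i) ↔ ∃ n, t n = s))
    (hu : ∀ n, crossingAt m ω (t n) (u n)) (n k k' : ℕ)
    (hg : ∀ i j, ∀ a < n, gap ω (toNext m ω (t k)) i j a = gap ω (toNext m ω (t k')) i j a)
    (r : ℕ) (hr : r < n) : u (k + r) = u (k' + r) := by
  set i := u (k + r) with hi
  obtain ⟨z, hz⟩ := hu (k + r)
  rw [← hi] at hz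
  have hω := hpos i
  have hle : ⌈m i + t k * ω i⌉ ≤ z := by
    rw [Int.ceil_le, ← hz]
    have : t k ≤ t (k + r) := ht.monotone (Nat.le_add_right _ _)
    nlinarith
  obtain ⟨a, ha⟩ := Int.eq_ofNat_of_zero_le (sub_nonneg.2 hle)
  have hza : z = ⌈m i + t k * ω i⌉ + a := by omega
  have hra := index_eq_sum_gap hpos hm ht ht0 hc hu k r a i (by rw [hz, hza]; push_cast; rfl)
  have hy := toNext_nonneg m ω (t k)
  have hy1 := toNext_lt_one m ω (t k)
  have hnn : ∀ j, 0 ≤ gap ω (toNext m ω (t k)) i j a := by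
    intro j
    have h0 : 0 ≤ (a + toNext m ω (t k) i) / ω i * ω j :=
      mul_nonneg (div_nonneg (add_nonneg (Nat.cast_nonneg _) (hy i)) hω.le) (hpos j).le
    have : (-1 : ℤ) < gap ω (toNext m ω (t k)) i j a := by
      rw [gap, Int.lt_ceil]; push_cast; linarith [hy1 j]
    omega
  have hself : gap ω (toNext m ω (t k)) i i a = a := by
    rw [gap, div_mul_cancel₀ _ hω.ne']; simp
  have han : a < n := by
    have := Finset.single_le_sum (fun j _ => hnn j) (Finset.mem_univ i)
    rw [hself, ← hra] at this
    omega
  -- the `a`-th crossing of coordinate `i` after time `t k'` happens at position `r` as well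
  set s := (⌈m i + t k' * ω i⌉ + a - m i) / ω i with hs
  have hsi : m i + s * ω i = ⌈m i + t k' * ω i⌉ + a := by
    rw [hs, div_mul_cancel₀ _ hω.ne']; ring
  have hsk : t k' ≤ s := by
    rw [hs, le_div_iff₀ hω]
    have := Int.le_ceil (m i + t k' * ω i)
    have : (0 : ℝ) ≤ a := Nat.cast_nonneg a
    linarith
  have hcs : crossingAt m ω s i := ⟨⌈m i + t k' * ω i⌉ + a, by rw [hsi]; push_cast; rfl⟩
  have hs0 : 0 < s := (ht0 k').trans_le hsk
  obtain ⟨l, hl⟩ := (hc s hs0).1 ⟨i, hcs⟩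
  obtain ⟨r', rfl⟩ := Nat.exists_eq_add_of_le (ht.le_iff_le.1 (hl ▸ hsk))
  have hra' := index_eq_sum_gap hpos hm ht ht0 hc hu k' r' a i (by rw [hl, hsi])
  have hrr : r = r' := by
    have : (r : ℤ) = r' := by
      rw [hra, hra']
      exact Finset.sum_congr rfl fun j _ => hg i j a han
    exact_mod_cast this
  subst hrr
  have hcu : crossingAt m ω s (u (k' + r)) := hl ▸ hu (k' + r)
  exact hm s hs0 _ _ hcs hcu

/-! ### Monotonicity of the gap counts under a linear relation -/

/-- The `gap` integers stay within a bounded distance of `a * ω j / ω i`; the sum of all ratios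
serves as a common bound for `ω j / ω i`. -/
lemma abs_gap_sub_le {ω y : Fin 3 → ℝ} (hpos : ∀ i, 0 < ω i) (hy : ∀ i, 0 ≤ y i)
    (hy1 : ∀ i, y i < 1) (i j : Fin 3) (a : ℕ) :
    |(gap ω y i j a : ℝ) - a / ω i * ω j| ≤ 1 + ∑ p : Fin 3 × Fin 3, ω p.2 / ω p.1 := by
  have hR : ω j / ω i ≤ ∑ p : Fin 3 × Fin 3, ω p.2 / ω p.1 :=
    Finset.single_le_sum (f := fun p : Fin 3 × Fin 3 => ω p.2 / ω p.1)
      (fun p _ => (div_pos (hpos _) (hpos _)).le) (Finset.mem_univ (i, j))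
  have h1 := Int.le_ceil ((a + y i) / ω i * ω j - y j)
  have h2 := Int.ceil_lt_add_one ((a + y i) / ω i * ω j - y j)
  have h3 : (a + y i) / ω i * ω j = a / ω i * ω j + y i * (ω j / ω i) := by ring
  have hq := div_pos (hpos j) (hpos i)
  have h4 : 0 ≤ y i * (ω j / ω i) := mul_nonneg (hy i) hq.le
  have h5 : y i * (ω j / ω i) ≤ ω j / ω i := by nlinarith [hy1 i]
  have := hy j
  have := hy1 j
  rw [gap, abs_le]
  constructor <;> linarith

/-- Proportions in which the waiting times `y i / ω i`, measured relative to that of coordinate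
`0`, vary when `q · y` is kept constant. -/
noncomputable def waitSlope (q : Fin 3 → ℤ) (ω : Fin 3 → ℝ) : Fin 3 → ℝ :=
  ![0, 1, -(q 1 * ω 1) / (q 2 * ω 2)]

/-- The sign making `± gap ω y i j a` a nondecreasing function of `y 1 / ω 1 - y 0 / ω 0` when
`q · y` is kept constant. -/
noncomputable def gapSign (q : Fin 3 → ℤ) (ω : Fin 3 → ℝ) (i j : Fin 3) : ℤ :=
  if waitSlope q ω j ≤ waitSlope q ω i then 1 else -1

lemma abs_gapSign (q : Fin 3 → ℤ) (ω : Fin 3 → ℝ) (i j : Fin 3) : |(gapSign q ω i j : ℝ)| = 1 := by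
  unfold gapSign; split_ifs <;> simp

/-- Signed sum of all the integers `gap` with `a < n`. -/
noncomputable def gapSum (q : Fin 3 → ℤ) (ω y : Fin 3 → ℝ) (n : ℕ) : ℤ :=
  ∑ p : (Fin 3 × Fin 3) × Fin n, gapSign q ω p.1.1 p.1.2 * gap ω y p.1.1 p.1.2 p.2

lemma gapSign_mul_gap_le {q : Fin 3 → ℤ} {ω y y' : Fin 3 → ℝ} (hpos : ∀ i, 0 < ω i)
    (hq : ∑ i, q i * ω i = 0) (hq2 : q 2 ≠ 0) (hE : ∑ i, q i * y i = ∑ i, q i * y' i)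
    (hd : y 1 / ω 1 - y 0 / ω 0 ≤ y' 1 / ω 1 - y' 0 / ω 0) (i j : Fin 3) (a : ℕ) :
    gapSign q ω i j * gap ω y i j a ≤ gapSign q ω i j * gap ω y' i j a := by
  set D := (y' 1 / ω 1 - y' 0 / ω 0) - (y 1 / ω 1 - y 0 / ω 0) with hD
  have hD0 : 0 ≤ D := by linarith
  have hq2' : (q 2 : ℝ) ≠ 0 := by exact_mod_cast hq2
  have hv : ∀ l, (y' l / ω l - y l / ω l) - (y' 0 / ω 0 - y 0 / ω 0) = waitSlope q ω l * D := by
    have h0 := (hpos 0).ne'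
    have h1 := (hpos 1).ne'
    have h2 := (hpos 2).ne'
    rw [Fin.sum_univ_three] at hq
    rw [Fin.sum_univ_three, Fin.sum_univ_three] at hE
    intro l
    fin_cases l
    · simp [waitSlope]
    · simp [waitSlope, hD]; ring
    · -- subtracting a multiple of `q · ω = 0` from the relation `hE` eliminates coordinate `0`
      have e : ∀ l, y' l - y l = ω l * (y' l / ω l - y l / ω l) := fun l => by
        have := (hpos l).ne'
        field_simp
      have e0 := e 0
      have e1 := e 1
      have e2 := e 2
      have : q 1 * ω 1 * D + q 2 * ω 2 *
          ((y' 2 / ω 2 - y 2 / ω 2) - (y' 0 / ω 0 - y 0 / ω 0)) = 0 := by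
        rw [hD]
        linear_combination (-(y' 0 / ω 0 - y 0 / ω 0)) * hq - hE - q 0 * e0 - q 1 * e1 - q 2 * e2
      have hne : (q 2 : ℝ) * ω 2 ≠ 0 := mul_ne_zero hq2' h2
      simp only [waitSlope]
      simp
      rw [div_mul_eq_mul_div, eq_div_iff hne]
      linarith
  have hg : ∀ z : Fin 3 → ℝ, (a + z i) / ω i * ω j - z j
      = a / ω i * ω j + ω j * (z i / ω i - z j / ω j) := by
    intro z
    have := (hpos i).ne'
    have := (hpos j).ne'
    field_simp
    ring
  have hdiff : (y' i / ω i - y' j / ω j) - (y i / ω i - y j / ω j)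
      = (waitSlope q ω i - waitSlope q ω j) * D := by
    linear_combination hv i - hv j
  have hj := hpos j
  unfold gapSign gap
  rw [hg y, hg y']
  split_ifs with h
  · have h0 : 0 ≤ (waitSlope q ω i - waitSlope q ω j) * D := mul_nonneg (sub_nonneg.2 h) hD0
    rw [one_mul, one_mul]
    exact Int.ceil_mono (by nlinarith)
  · have h0 : 0 ≤ (waitSlope q ω j - waitSlope q ω i) * D :=
      mul_nonneg (sub_nonneg.2 (not_le.1 h).le) hD0
    rw [neg_one_mul, neg_one_mul, neg_le_neg_iff]
    exact Int.ceil_mono (by nlinarith)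

/-- For fixed `q · y` the families `± gap` are totally ordered pointwise, so equality of their sums
forces equality term by term. -/
lemma gap_eq_of_key_eq {q : Fin 3 → ℤ} {ω y y' : Fin 3 → ℝ} (hpos : ∀ i, 0 < ω i)
    (hq : ∑ i, q i * ω i = 0) (hq2 : q 2 ≠ 0) (hE : ∑ i, q i * y i = ∑ i, q i * y' i)
    (n : ℕ) (hS : gapSum q ω y n = gapSum q ω y' n) (i j : Fin 3) (a : ℕ) (ha : a < n) :
    gap ω y i j a = gap ω y' i j a := by
  wlog hd : y 1 / ω 1 - y 0 / ω 0 ≤ y' 1 / ω 1 - y' 0 / ω 0 generalizing y y'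
  · exact (this hE.symm hS.symm (not_le.1 hd).le).symm
  have h := (Finset.sum_eq_sum_iff_of_le fun (p : (Fin 3 × Fin 3) × Fin n) _ =>
    gapSign_mul_gap_le hpos hq hq2 hE hd p.1.1 p.1.2 p.2).1 hS ((i, j), ⟨a, ha⟩) (Finset.mem_univ _)
  refine mul_left_cancel₀ ?_ h
  unfold gapSign; split_ifs <;> simp

/-! ### Counting factors -/

/-- Upper bound for the number of integers within distance `w` of a real number `c`. -/
lemma card_Icc_le (c w : ℝ) (hw : 0 ≤ w) :
    ((Finset.Icc ⌈c - w⌉ ⌊c + w⌋).card : ℝ) ≤ 2 * w + 1 := by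
  rw [Int.card_Icc]
  have h1 := Int.le_ceil (c - w)
  have h2 := Int.floor_le (c + w)
  rcases le_total 0 (⌊c + w⌋ + 1 - ⌈c - w⌉) with h | h
  · have : (((⌊c + w⌋ + 1 - ⌈c - w⌉).toNat : ℤ) : ℝ) = ((⌊c + w⌋ + 1 - ⌈c - w⌉ : ℤ) : ℝ) := by
      rw [Int.toNat_of_nonneg h]
    rw [Int.cast_natCast] at this
    rw [this]; push_cast; linarith
  · rw [Int.toNat_of_nonpos h]; push_cast; linarith

lemma mem_Icc_of_abs_le {z : ℤ} {c w : ℝ} (h : |(z : ℝ) - c| ≤ w) :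
    z ∈ Finset.Icc ⌈c - w⌉ ⌊c + w⌋ := by
  rw [abs_le] at h
  rw [Finset.mem_Icc, Int.ceil_le, Int.le_floor]
  constructor <;> linarith

/-- The linear bound for a single billiard word, with a constant depending on `q` and `ω` only. -/
lemma complexity_le {q : Fin 3 → ℤ} {m ω : Fin 3 → ℝ} (hpos : ∀ i, 0 < ω i)
    (hq : ∑ i, q i * ω i = 0) (hq2 : q 2 ≠ 0) (hm : Admissible m ω)
    {u : ℕ → Fin 3} (hcut : IsCuttingSeq m ω u) (n : ℕ) :
    (complexity u n : ℝ) ≤ (2 * (∑ i, |(q i : ℝ)|) + 1) *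
      (2 * (9 * n * (1 + ∑ p : Fin 3 × Fin 3, ω p.2 / ω p.1)) + 1) := by
  obtain ⟨t, ht, ht0, hc, hu⟩ := hcut
  set R := 1 + ∑ p : Fin 3 × Fin 3, ω p.2 / ω p.1 with hR
  have hR0 : 0 ≤ R := by
    have : 0 ≤ ∑ p : Fin 3 × Fin 3, ω p.2 / ω p.1 :=
      Finset.sum_nonneg fun p _ => (div_pos (hpos _) (hpos _)).le
    linarith
  set Q := ∑ i, |(q i : ℝ)| with hQ
  have hQ0 : 0 ≤ Q := Finset.sum_nonneg fun i _ => abs_nonneg _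
  set E : ℕ → ℤ := fun k => ∑ i, q i * ⌈m i + t k * ω i⌉ with hEdef
  set S : ℕ → ℤ := fun k => gapSum q ω (toNext m ω (t k)) n with hSdef
  set cE : ℝ := ∑ i, q i * m i with hcE
  set cS : ℝ := ∑ p : (Fin 3 × Fin 3) × Fin n,
    (gapSign q ω p.1.1 p.1.2 : ℝ) * ((p.2 : ℕ) / ω p.1.1 * ω p.1.2) with hcS
  have hEy : ∀ k, ∑ i, q i * toNext m ω (t k) i = E k - cE := by
    intro k
    simp only [hEdef, hcE, toNext, Fin.sum_univ_three] at hq ⊢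
    push_cast
    linear_combination (-t k) * hq
  have hEb : ∀ k, |(E k : ℝ) - cE| ≤ Q := by
    intro k
    rw [← hEy]
    refine (Finset.abs_sum_le_sum_abs _ _).trans (Finset.sum_le_sum fun i _ => ?_)
    rw [abs_mul, abs_of_nonneg (toNext_nonneg m ω (t k) i)]
    exact mul_le_of_le_one_right (abs_nonneg _) (toNext_lt_one m ω (t k) i).le
  have hSb : ∀ k, |(S k : ℝ) - cS| ≤ 9 * n * R := by
    intro k
    have e : (S k : ℝ) - cS = ∑ p : (Fin 3 × Fin 3) × Fin n, (gapSign q ω p.1.1 p.1.2 : ℝ) *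
        ((gap ω (toNext m ω (t k)) p.1.1 p.1.2 p.2 : ℝ) - (p.2 : ℕ) / ω p.1.1 * ω p.1.2) := by
      simp only [hSdef, gapSum, hcS, mul_sub, Finset.sum_sub_distrib]
      push_cast
      rfl
    rw [e]
    have hb : ∀ p ∈ (Finset.univ : Finset ((Fin 3 × Fin 3) × Fin n)),
        |(gapSign q ω p.1.1 p.1.2 : ℝ) *
        ((gap ω (toNext m ω (t k)) p.1.1 p.1.2 p.2 : ℝ) - (p.2 : ℕ) / ω p.1.1 * ω p.1.2)| ≤ R := by
      intro p _
      rw [abs_mul, abs_gapSign, one_mul]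
      exact abs_gap_sub_le hpos (toNext_nonneg m ω _) (toNext_lt_one m ω _) _ _ _
    refine (Finset.abs_sum_le_sum_abs _ _).trans ((Finset.sum_le_card_nsmul _ _ R hb).trans ?_)
    simp only [Finset.card_univ, Fintype.card_prod, Fintype.card_fin, nsmul_eq_mul]
    push_cast
    linarith
  -- the factors are a function of the pair `(E k, S k)`, which ranges over a box of integers
  set B := Finset.Icc ⌈cE - Q⌉ ⌊cE + Q⌋ ×ˢ Finset.Icc ⌈cS - 9 * n * R⌉ ⌊cS + 9 * n * R⌋ with hB
  have hmem : ∀ k, (E k, S k) ∈ B := fun k =>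
    Finset.mem_product.2 ⟨mem_Icc_of_abs_le (hEb k), mem_Icc_of_abs_le (hSb k)⟩
  have hword : ∀ k k', (E k, S k) = (E k', S k') → ∀ r < n, u (k + r) = u (k' + r) := by
    intro k k' h
    obtain ⟨h1, h2⟩ := Prod.mk.inj h
    exact word_eq hpos hm ht ht0 hc hu n k k' fun i j a ha =>
      gap_eq_of_key_eq hpos hq hq2 (by rw [hEy, hEy, h1]) n h2 i j a ha
  have hcard : complexity u n ≤ B.card := by
    classical
    rw [← Set.ncard_coe_finset, complexity]
    refine Set.ncard_le_ncard_of_injOn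
      (fun w => if h : ∃ k : ℕ, ∀ j : Fin n, w j = u (k + (j : ℕ)) then
        (E h.choose, S h.choose) else (0, 0)) ?_ ?_ (Finset.finite_toSet B)
    · intro w hw
      have hw' : ∃ k : ℕ, ∀ j : Fin n, w j = u (k + (j : ℕ)) := hw
      simp only [dif_pos hw']
      exact hmem _
    · intro w hw w' hw' h
      have h1 : ∃ k : ℕ, ∀ j : Fin n, w j = u (k + (j : ℕ)) := hw
      have h2 : ∃ k : ℕ, ∀ j : Fin n, w' j = u (k + (j : ℕ)) := hw'
      simp only [dif_pos h1, dif_pos h2] at h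
      funext j
      rw [h1.choose_spec j, h2.choose_spec j]
      exact hword _ _ h j j.2
  calc (complexity u n : ℝ) ≤ B.card := by exact_mod_cast hcard
    _ ≤ _ := by
      rw [hB, Finset.card_product]
      push_cast
      have hn : 0 ≤ 9 * n * R := by positivity
      exact mul_le_mul (card_Icc_le cE Q hQ0) (card_Icc_le cS _ hn) (Nat.cast_nonneg _)
        (by linarith)

/-- An integer relation between the coordinates of `ω` whose last coefficient is nonzero. -/
lemma exists_relation (ω : Fin 3 → ℝ) (hpos : ∀ i, 0 < ω i) (hα : Irrational (ω 1 / ω 0))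
    (hdep : ¬ LinearIndependent ℚ ![(1 : ℝ), ω 1 / ω 0, ω 2 / ω 0]) :
    ∃ q : Fin 3 → ℤ, ∑ i, q i * ω i = 0 ∧ q 2 ≠ 0 := by
  rw [← LinearIndependent.iff_fractionRing ℤ ℚ, Fintype.not_linearIndependent_iff] at hdep
  obtain ⟨q, hq, hne⟩ := hdep
  have h0 := (hpos 0).ne'
  simp only [Fin.sum_univ_three, zsmul_eq_mul] at hq
  simp at hq
  refine ⟨q, ?_, ?_⟩
  · rw [Fin.sum_univ_three]
    field_simp at hq
    linarith
  · intro h2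
    rw [h2] at hq
    by_cases h1 : q 1 = 0
    · have h3 : q 0 = 0 := by simpa [h1] using hq
      obtain ⟨i, hi⟩ := hne
      fin_cases i <;> simp_all
    · have h1' : (q 1 : ℝ) ≠ 0 := by exact_mod_cast h1
      refine hα ⟨-(q 0) / q 1, ?_⟩
      push_cast
      rw [div_eq_iff h1']
      simp at hq
      linarith

/-- Case (3): if `α = ω₂/ω₁` and `β = ω₃/ω₁` are irrational but `1, α, β` are
linearly dependent over `ℚ`, then the complexity is sub-linear: `p(n, ω) ≤ C n`. -/
theorem stmt2 (ω : Fin 3 → ℝ) (hpos : ∀ i, 0 < ω i)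
    (hα : Irrational (ω 1 / ω 0)) (hβ : Irrational (ω 2 / ω 0))
    (hdep : ¬ LinearIndependent ℚ ![(1 : ℝ), ω 1 / ω 0, ω 2 / ω 0]) :
    ∃ C : ℝ, 0 < C ∧ ∀ n : ℕ, 1 ≤ n → (pDir ω n : ℝ) ≤ C * (n : ℝ) := by
  obtain ⟨q, hq, hq2⟩ := exists_relation ω hpos hα hdep
  set Q := ∑ i, |(q i : ℝ)| with hQ
  set R := 1 + ∑ p : Fin 3 × Fin 3, ω p.2 / ω p.1 with hR
  have hQ0 : 0 ≤ Q := Finset.sum_nonneg fun i _ => abs_nonneg _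
  have hR0 : 0 ≤ R := by
    have : 0 ≤ ∑ p : Fin 3 × Fin 3, ω p.2 / ω p.1 :=
      Finset.sum_nonneg fun p _ => (div_pos (hpos _) (hpos _)).le
    linarith
  refine ⟨(2 * Q + 1) * (18 * R + 1), by positivity, fun n hn => ?_⟩
  have hn' : (1 : ℝ) ≤ n := by exact_mod_cast hn
  set A := {c : ℕ | ∃ m u, Admissible m ω ∧ IsCuttingSeq m ω u ∧ c = complexity u n} with hA
  have hall : ∀ c ∈ A, (c : ℝ) ≤ (2 * Q + 1) * (18 * R + 1) * n := by
    rintro c ⟨m, u, hm, hu, rfl⟩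
    refine (complexity_le hpos hq hq2 hm hu n).trans ?_
    have h18 : 2 * (9 * n * R) + 1 ≤ (18 * R + 1) * n := by linarith
    rw [mul_assoc (2 * Q + 1)]
    exact mul_le_mul_of_nonneg_left h18 (by linarith)
  rw [pDir, ← hA]
  rcases Set.eq_empty_or_nonempty A with h | h
  · rw [h, csSup_empty, Nat.bot_eq_zero, Nat.cast_zero]
    positivity
  · exact hall _ (Nat.sSup_mem h
      ⟨⌊(2 * Q + 1) * (18 * R + 1) * n⌋₊, fun c hc => Nat.le_floor (hall c hc)⟩)
end

section
/- Let ω = (ω₁,ω₂,ω₃) ∈ ℝ³ with ωᵢ > 0 for each i, and set α = ω₂/ω₁, β = ω₃/ω₁. Suppose 1, α, β are linearly independent over ℚ while 1, α⁻¹, β⁻¹ are linearly dependent over ℚ. Then there exists a constant C ∈ (0,1) such that p(n,ω)/n² → C as n → ∞. -/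
/-!
Put `τ i = 1 / ω i`. The word of a billiard orbit records the order in which three clocks of
periods `τ i` ring, so it is convenient to study the set `lang τ n` of all words of length `n`
produced by such clocks in some relative position. By Kronecker's theorem for `(α, β)`
(`kronecker_two`, obtained from Weyl averages on the torus) the orbit of the origin sees every
relative position approximately, and the positions producing a given word form an open set. Hence
`pDir ω n = (lang τ n).ncard` (`pDir_eq`).

The positions producing `w` also form a convex set. Following segments in it, one sees that the
number of left extensions of `w`, minus one, is the number of pairs of clocks that may ring
together just before `w`, except for the single word that follows a triple tie. Therefore
`p (n + 1) - p n` is, up to one, the sum over `k` of the number of words of length `n` following a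
tie of the two clocks `i, j ≠ k` (`ncard_lang_succ`). After such a tie the state depends on one
parameter `y ∈ (0, τ k)`, the next ringing time of clock `k`, and the word changes exactly at the
values of `y` for which a new tie occurs within the first `n` rings (`tieWords_ncard`). A tie of
`i` and `j` cannot recur, so these values form two families, coming from ties of `i` with `k` and
of `j` with `k`; they have densities `1 / (τ i * freq τ)` and `1 / (τ j * freq τ)` in `n`. Without
coincidences between the families the three values of `k` would contribute `2 n` in total.

Coincidences come from integer relations between the periods. Since `1, α⁻¹, β⁻¹` are dependent
but the periods are pairwise incommensurable, these relations are the multiples of one relation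
`ρ` with nonzero coefficients (`exists_relGen`). The families for `k` share no point if
`ρ i` and `ρ j` have the same sign, and share a set of density `L ∈ (0, 1)` if the signs differ
(`common_breaks`). As the periods are positive, exactly two of the three pairs have opposite signs
(`sign_split`), so `p (n + 1) - p n = κ n + O(1)` with `0 < κ < 2`, and `p n / n ^ 2` tends
to `κ / 2`.
-/

open Filter Topology

/-! ### Greedy coding of three periodic clocks -/

/-- The state obtained after clock `i` rings: its next ringing time is postponed by its
period `τ i`. -/
def bump (τ e : Fin 3 → ℝ) (i : Fin 3) : Fin 3 → ℝ := Function.update e i (e i + τ i)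

/-- `Codes τ e w`: three clocks with periods `τ i`, whose next ringing times are `e i`, ring
in the order prescribed by the finite word `w`, without any simultaneous ringing on the way. -/
def Codes (τ : Fin 3 → ℝ) : (Fin 3 → ℝ) → List (Fin 3) → Prop
  | _, [] => True
  | e, i :: w => (∀ j, j ≠ i → e i < e j) ∧ Codes τ (bump τ e i) w

lemma bump_self (τ e : Fin 3 → ℝ) (i : Fin 3) : bump τ e i i = e i + τ i := by
  simp [bump]

lemma bump_of_ne (τ e : Fin 3 → ℝ) {i j : Fin 3} (h : j ≠ i) : bump τ e i j = e j := by
  simp [bump, h]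

lemma bump_eq_add (τ e : Fin 3 → ℝ) (i : Fin 3) : bump τ e i = e + Pi.single i (τ i) := by
  ext j
  by_cases h : j = i
  · subst h; simp [bump]
  · simp [bump, h]

lemma Codes.unique {τ : Fin 3 → ℝ} : ∀ {w w' : List (Fin 3)} {e : Fin 3 → ℝ},
    w.length = w'.length → Codes τ e w → Codes τ e w' → w = w'
  | [], [], _, _, _, _ => rfl
  | [], _ :: _, _, h, _, _ => by simp at h
  | _ :: _, [], _, h, _, _ => by simp at h
  | i :: w, j :: w', e, h, h1, h2 => by
    have hij : i = j := by
      by_contra hne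
      exact lt_asymm (h1.1 j (Ne.symm hne)) (h2.1 i hne)
    subst hij
    rw [Codes.unique (by simpa using h) h1.2 h2.2]

lemma Codes.isOpen (τ : Fin 3 → ℝ) : ∀ w : List (Fin 3), IsOpen {e | Codes τ e w}
  | [] => by simp [Codes]
  | i :: w => by
    have h1 : IsOpen {e : Fin 3 → ℝ | ∀ j, j ≠ i → e i < e j} := by
      simp only [Set.ofPred_forall]
      refine isOpen_iInter_of_finite fun j => isOpen_iInter_of_finite fun _ => ?_
      exact isOpen_lt (continuous_apply i) (continuous_apply j)
    have h2 : IsOpen {e : Fin 3 → ℝ | Codes τ (bump τ e i) w} := by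
      refine (Codes.isOpen τ w).preimage (f := fun e => bump τ e i) ?_
      simp only [bump_eq_add]
      fun_prop
    exact h1.inter h2

lemma Codes.convex (τ : Fin 3 → ℝ) : ∀ w : List (Fin 3), Convex ℝ {e | Codes τ e w}
  | [] => by simpa [Codes] using convex_univ
  | i :: w => by
    intro x hx y hy a b ha hb hab
    refine ⟨fun j hj => ?_, ?_⟩
    · have h1 := hx.1 j hj
      have h2 := hy.1 j hj
      simp only [Pi.add_apply, Pi.smul_apply, smul_eq_mul]
      rcases ha.eq_or_lt with rfl | ha'
      · have : b = 1 := by linarith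
        subst this; linarith
      · nlinarith [mul_lt_mul_of_pos_left h1 ha', mul_le_mul_of_nonneg_left h2.le hb]
    · have := Codes.convex τ w hx.2 hy.2 ha hb hab
      have he : a • bump τ x i + b • bump τ y i = bump τ (a • x + b • y) i := by
        simp only [bump_eq_add]
        rw [smul_add, smul_add, add_add_add_comm, ← add_smul, hab, one_smul]
      rw [he] at this
      exact this

lemma Codes.translate {τ : Fin 3 → ℝ} (c : ℝ) : ∀ {w : List (Fin 3)} {e : Fin 3 → ℝ},
    Codes τ e w → Codes τ (fun i => e i + c) w
  | [], _, _ => trivial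
  | i :: w, e, h => by
    refine ⟨fun j hj => by simpa using h.1 j hj, ?_⟩
    have := Codes.translate c h.2
    convert this using 1
    ext j
    by_cases hj : j = i
    · subst hj; simp [bump]; ring
    · simp [bump, hj]

/-- Number of rings strictly before time `t`, for clocks whose next ringing times are `e`.
`Nat.ceil` truncates at `0`, so clocks with `t ≤ e i` contribute nothing. -/
noncomputable def ringsBefore (τ e : Fin 3 → ℝ) (t : ℝ) : ℕ := ∑ i, ⌈(t - e i) / τ i⌉₊

/-- Two different clocks ring simultaneously at time `t`. -/
def HasTie (τ e : Fin 3 → ℝ) (t : ℝ) : Prop :=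
  ∃ i j : Fin 3, i ≠ j ∧ (∃ a : ℕ, t = e i + a * τ i) ∧ ∃ b : ℕ, t = e j + b * τ j

lemma ringsBefore_bump {τ : Fin 3 → ℝ} (hτ : ∀ i, 0 < τ i)
    {e : Fin 3 → ℝ} {i : Fin 3} {t : ℝ} (h : e i < t) :
    ringsBefore τ (bump τ e i) t + 1 = ringsBefore τ e t := by
  unfold ringsBefore
  rw [← Finset.add_sum_erase _ _ (Finset.mem_univ i), ← Finset.add_sum_erase
    _ (fun j => ⌈(t - e j) / τ j⌉₊) (Finset.mem_univ i)]
  have h1 : ∑ x ∈ Finset.univ.erase i, ⌈(t - bump τ e i x) / τ x⌉₊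
      = ∑ x ∈ Finset.univ.erase i, ⌈(t - e x) / τ x⌉₊ := by
    refine Finset.sum_congr rfl fun x hx => ?_
    rw [bump_of_ne τ e (Finset.ne_of_mem_erase hx)]
  have h2 : ⌈(t - e i) / τ i⌉₊ = ⌈(t - bump τ e i i) / τ i⌉₊ + 1 := by
    have h3 : (t - bump τ e i i) / τ i = (t - e i) / τ i - 1 := by
      rw [bump_self]
      field_simp [(hτ i).ne']
      ring
    have h4 : 0 < (t - e i) / τ i := div_pos (by linarith) (hτ i)
    rw [h3]
    have h5 : 0 < ⌈(t - e i) / τ i⌉₊ := Nat.ceil_pos.2 h4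
    rw [Nat.ceil_sub_one]
    omega
  rw [h1, h2]
  ring

lemma HasTie.bump_iff {τ : Fin 3 → ℝ} (hτ : ∀ i, 0 < τ i)
    {e : Fin 3 → ℝ} {i : Fin 3} (hi : ∀ j, j ≠ i → e i < e j) {t : ℝ} :
    HasTie τ (bump τ e i) t ↔ HasTie τ e t := by
  have key : ∀ j k : Fin 3, j ≠ k → ((∃ a : ℕ, t = bump τ e i j + a * τ j) ∧
      (∃ b : ℕ, t = bump τ e i k + b * τ k) ↔
      (∃ a : ℕ, t = e j + a * τ j) ∧ ∃ b : ℕ, t = e k + b * τ k) := by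
    have aux : ∀ k : Fin 3, k ≠ i → (∃ b : ℕ, t = e k + b * τ k) →
        ((∃ a : ℕ, t = bump τ e i i + a * τ i) ↔ ∃ a : ℕ, t = e i + a * τ i) := by
      rintro k hk ⟨b, hb⟩
      rw [bump_self]
      constructor
      · rintro ⟨a, ha⟩
        exact ⟨a + 1, by rw [ha]; push_cast; ring⟩
      · rintro ⟨a, ha⟩
        cases a with
        | zero =>
          have := hi k hk
          have hb' : 0 ≤ (b : ℝ) * τ k := mul_nonneg (Nat.cast_nonneg _) (hτ k).le
          simp at ha
          linarith
        | succ a => exact ⟨a, by rw [ha]; push_cast; ring⟩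
    intro j k hjk
    by_cases hj : j = i
    · subst hj
      rw [bump_of_ne τ e hjk.symm]
      exact and_congr_left fun h => aux k hjk.symm h
    · rw [bump_of_ne τ e hj]
      by_cases hk : k = i
      · subst hk
        exact and_congr_right fun h => aux j hjk h
      · rw [bump_of_ne τ e hk]
  unfold HasTie
  constructor
  · rintro ⟨j, k, hjk, h⟩
    exact ⟨j, k, hjk, (key j k hjk).1 h⟩
  · rintro ⟨j, k, hjk, h⟩
    exact ⟨j, k, hjk, (key j k hjk).2 h⟩

lemma HasTie.lt {τ : Fin 3 → ℝ} (hτ : ∀ i, 0 < τ i)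
    {e : Fin 3 → ℝ} {i : Fin 3} (hi : ∀ j, j ≠ i → e i < e j) {t : ℝ}
    (h : HasTie τ e t) : e i < t := by
  obtain ⟨j, k, hjk, ⟨a, ha⟩, ⟨b, hb⟩⟩ := h
  have ha' : 0 ≤ (a : ℝ) * τ j := mul_nonneg (Nat.cast_nonneg _) (hτ j).le
  have hb' : 0 ≤ (b : ℝ) * τ k := mul_nonneg (Nat.cast_nonneg _) (hτ k).le
  by_cases hj : j = i
  · have := hi k (fun h => hjk (hj.trans h.symm)); linarith
  · have := hi j hj; linarith

lemma exists_min (e : Fin 3 → ℝ) : ∃ i, ∀ j, e i ≤ e j := Finite.exists_min e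

/-- The only obstruction to reading a word of length `n` is a tie occurring among the
first rings. -/
lemma exists_codes_iff {τ : Fin 3 → ℝ} (hτ : ∀ i, 0 < τ i) : ∀ (n : ℕ) (e : Fin 3 → ℝ),
    (∃ w : List (Fin 3), w.length = n ∧ Codes τ e w) ↔ ∀ t, HasTie τ e t → n ≤ ringsBefore τ e t
  | 0, e => by
    simp only [zero_le, implies_true, iff_true]
    exact ⟨[], rfl, trivial⟩
  | n + 1, e => by
    constructor
    · rintro ⟨w, hw, hc⟩ t ht
      cases w with
      | nil => simp at hw
      | cons i w =>
        have h1 := (exists_codes_iff hτ n (bump τ e i)).1 ⟨w, by simpa using hw, hc.2⟩ t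
          ((HasTie.bump_iff hτ hc.1).2 ht)
        have h2 := ringsBefore_bump hτ (HasTie.lt hτ hc.1 ht)
        omega
    · intro h
      obtain ⟨i, hi⟩ := exists_min e
      have hi' : ∀ j, j ≠ i → e i < e j := by
        intro j hj
        refine lt_of_le_of_ne (hi j) fun heq => ?_
        have h1 := h (e i) ⟨i, j, hj.symm, ⟨0, by simp⟩, ⟨0, by simp [heq]⟩⟩
        have h2 : ringsBefore τ e (e i) = 0 := by
          unfold ringsBefore
          refine Finset.sum_eq_zero fun l _ => ?_
          rw [Nat.ceil_eq_zero]
          exact div_nonpos_of_nonpos_of_nonneg (by linarith [hi l]) (hτ l).le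
        omega
      obtain ⟨w, hw, hc⟩ := (exists_codes_iff hτ n (bump τ e i)).2 (by
        intro t ht
        have ht' := (HasTie.bump_iff hτ hi').1 ht
        have h1 := h t ht'
        have h2 := ringsBefore_bump hτ (HasTie.lt hτ hi' ht')
        omega)
      exact ⟨i :: w, by simp [hw], hi', hc⟩

/-! ### The language and its left extensions -/

/-- `q i` can be the last ringing time of clock `i` at some common instant: every last ring
precedes every next ring. -/
def ValidState (τ q : Fin 3 → ℝ) : Prop := ∀ i j, q i < q j + τ j

/-- Cell of the word `w`: the valid states (recorded by last ringing times `q`, so that the next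
ringing times are `q + τ`) from which `w` is read. -/
def cell (τ : Fin 3 → ℝ) (w : List (Fin 3)) : Set (Fin 3 → ℝ) :=
  {q | ValidState τ q ∧ Codes τ (q + τ) w}

/-- The words of length `n` that are read from some valid state. -/
def lang (τ : Fin 3 → ℝ) (n : ℕ) : Set (List (Fin 3)) :=
  {w | w.length = n ∧ (cell τ w).Nonempty}

/-- `i` is a possible letter in front of `w`: clock `i` was the last one to ring. -/
def LeftExt (τ : Fin 3 → ℝ) (w : List (Fin 3)) (i : Fin 3) : Prop :=
  ∃ q ∈ cell τ w, ∀ j, j ≠ i → q j < q i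

/-- `w` can be read right after a simultaneous ring of the two clocks different from `k`. -/
def AfterTie (τ : Fin 3 → ℝ) (w : List (Fin 3)) (k : Fin 3) : Prop :=
  ∃ q ∈ cell τ w, (∀ j, j ≠ k → q k < q j) ∧ ∀ i j, i ≠ k → j ≠ k → q i = q j

lemma lang_finite (τ : Fin 3 → ℝ) (n : ℕ) : (lang τ n).Finite :=
  (List.finite_length_eq (Fin 3) n).subset fun _ h => h.1

lemma cell_isOpen (τ : Fin 3 → ℝ) (w : List (Fin 3)) : IsOpen (cell τ w) := by
  have h1 : IsOpen {q : Fin 3 → ℝ | ValidState τ q} := by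
    simp only [ValidState, Set.ofPred_forall]
    refine isOpen_iInter_of_finite fun i => isOpen_iInter_of_finite fun j => ?_
    exact isOpen_lt (continuous_apply i) ((continuous_apply j).add continuous_const)
  refine h1.inter ((Codes.isOpen τ w).preimage (f := fun q => q + τ) ?_)
  fun_prop

lemma cell_convex (τ : Fin 3 → ℝ) (w : List (Fin 3)) : Convex ℝ (cell τ w) := by
  intro x hx y hy a b ha hb hab
  refine ⟨fun i j => ?_, ?_⟩
  · have h1 := hx.1 i j
    have h2 := hy.1 i j
    simp only [Pi.add_apply, Pi.smul_apply, smul_eq_mul]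
    have h3 : τ j = a * τ j + b * τ j := by rw [← add_mul, hab, one_mul]
    rw [h3]
    rcases ha.eq_or_lt with rfl | ha'
    · have : b = 1 := by linarith
      subst this; linarith
    · nlinarith [mul_lt_mul_of_pos_left h1 ha', mul_le_mul_of_nonneg_left h2.le hb]
  · have := Codes.convex τ w hx.2 hy.2 ha hb hab
    have he : a • (x + τ) + b • (y + τ) = a • x + b • y + τ := by
      rw [smul_add, smul_add, add_add_add_comm, ← add_smul, hab, one_smul]
    rw [he] at this
    exact this

lemma cell_translate {τ : Fin 3 → ℝ} {w : List (Fin 3)} {q : Fin 3 → ℝ} (h : q ∈ cell τ w)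
    (c : ℝ) : (fun i => q i + c) ∈ cell τ w := by
  refine ⟨fun i j => by linarith [h.1 i j], ?_⟩
  convert h.2.translate c using 1
  ext i
  simp only [Pi.add_apply]
  ring

lemma cell_perturb {τ : Fin 3 → ℝ} {w : List (Fin 3)} {q : Fin 3 → ℝ} (h : q ∈ cell τ w) :
    ∃ ε > 0, ∀ q' : Fin 3 → ℝ, (∀ i, |q' i - q i| < ε) → q' ∈ cell τ w := by
  obtain ⟨ε, hε, hb⟩ := Metric.isOpen_iff.1 (cell_isOpen τ w) q h
  refine ⟨ε, hε, fun q' hq' => hb ?_⟩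
  rw [Metric.mem_ball, dist_pi_lt_iff hε]
  intro i
  rw [Real.dist_eq]
  exact hq' i

/-- Any coordinate of a point of a cell may be moved a little inside the cell. -/
lemma cell_raise {τ : Fin 3 → ℝ} {w : List (Fin 3)} {q : Fin 3 → ℝ} (h : q ∈ cell τ w)
    (i : Fin 3) : ∃ δ > 0, ∀ d, |d| < δ → Function.update q i (q i + d) ∈ cell τ w := by
  obtain ⟨ε, hε, hb⟩ := cell_perturb h
  refine ⟨ε, hε, fun d hd => hb _ fun j => ?_⟩
  by_cases hj : j = i
  · subst hj; simpa using hd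
  · simpa [hj] using hε

lemma cons_mem_lang {τ : Fin 3 → ℝ} (hτ : ∀ i, 0 < τ i) {w : List (Fin 3)} {i : Fin 3} {n : ℕ} :
    i :: w ∈ lang τ (n + 1) ↔ w.length = n ∧ LeftExt τ w i := by
  constructor
  · rintro ⟨hl, q, hv, hmin, hc⟩
    refine ⟨by simpa using hl, bump τ q i, ⟨?_, ?_⟩, ?_⟩
    · intro a b
      by_cases ha : a = i
      · subst ha
        by_cases hb : b = a
        · subst hb; linarith [hτ b]
        · rw [bump_self, bump_of_ne τ q hb]
          simpa using hmin b hb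
      · rw [bump_of_ne τ q ha]
        by_cases hb : b = i
        · subst hb; rw [bump_self]; linarith [hv a b, hτ b]
        · rw [bump_of_ne τ q hb]; exact hv a b
    · convert hc using 1
      simp only [bump_eq_add]
      rw [add_right_comm]
    · intro j hj
      rw [bump_self, bump_of_ne τ q hj]
      exact hv j i
  · rintro ⟨hl, q, ⟨hv, hc⟩, hmax⟩
    have hs : Function.update q i (q i - τ i) = q - Pi.single i (τ i) := by
      ext j
      by_cases hj : j = i
      · subst hj; simp
      · simp [hj]
    refine ⟨by simp [hl], Function.update q i (q i - τ i), ?_, ?_, ?_⟩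
    · intro a b
      by_cases ha : a = i
      · subst ha
        by_cases hb : b = a
        · subst hb; linarith [hτ b]
        · simp only [Function.update_self, Function.update_of_ne hb]
          linarith [hv a b, hτ a]
      · rw [Function.update_of_ne ha]
        by_cases hb : b = i
        · subst hb; rw [Function.update_self]; linarith [hmax a ha]
        · rw [Function.update_of_ne hb]; exact hv a b
    · intro j hj
      simpa [hj] using hv i j
    · rw [bump_eq_add, hs]
      convert hc using 1
      abel

lemma LeftExt.mem_lang {τ : Fin 3 → ℝ} {w : List (Fin 3)} {i : Fin 3} (h : LeftExt τ w i) :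
    w ∈ lang τ w.length := by
  obtain ⟨q, hq, -⟩ := h
  exact ⟨rfl, q, hq⟩

lemma AfterTie.mem_lang {τ : Fin 3 → ℝ} {w : List (Fin 3)} {i : Fin 3} (h : AfterTie τ w i) :
    w ∈ lang τ w.length := by
  obtain ⟨q, hq, -⟩ := h
  exact ⟨rfl, q, hq⟩

lemma exists_leftExt {τ : Fin 3 → ℝ} {w : List (Fin 3)} (h : (cell τ w).Nonempty) :
    ∃ i, LeftExt τ w i := by
  obtain ⟨q, hq⟩ := h
  obtain ⟨i, hi⟩ := Finite.exists_max q
  obtain ⟨δ, hδ, hr⟩ := cell_raise hq i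
  refine ⟨i, _, hr (δ / 2) (by rw [abs_of_pos (by linarith)]; linarith), fun j hj => ?_⟩
  simp only [Function.update_self, Function.update_of_ne hj]
  linarith [hi j]

lemma AfterTie.leftExt {τ : Fin 3 → ℝ} {w : List (Fin 3)} {i k : Fin 3} (h : AfterTie τ w k)
    (hik : i ≠ k) : LeftExt τ w i := by
  obtain ⟨q, hq, h1, h2⟩ := h
  obtain ⟨δ, hδ, hr⟩ := cell_raise hq i
  refine ⟨_, hr (δ / 2) (by rw [abs_of_pos (by linarith)]; linarith), fun j hj => ?_⟩
  simp only [Function.update_self, Function.update_of_ne hj]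
  by_cases hjk : j = k
  · subst hjk; linarith [h1 i hik]
  · linarith [h2 i j hik hjk]

lemma fin3_cases {i j k : Fin 3} (hij : i ≠ j) (hik : i ≠ k) (hjk : j ≠ k) (l : Fin 3) :
    l = i ∨ l = j ∨ l = k := by
  revert i j k l; decide

lemma exists_third (i j : Fin 3) : ∃ k : Fin 3, k ≠ i ∧ k ≠ j := by
  revert i j; decide

/-- Moving inside the (convex) cell from a state where clock `i` rang last to one where another
clock rang last, one meets a state in which clock `i` and exactly one other clock rang last. -/
lemma exists_afterTie {τ : Fin 3 → ℝ} {w : List (Fin 3)} {i j : Fin 3} (hij : i ≠ j)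
    (hi : LeftExt τ w i) (hj : LeftExt τ w j) : ∃ k, k ≠ i ∧ AfterTie τ w k := by
  obtain ⟨k, hki, hkj⟩ : ∃ k : Fin 3, k ≠ i ∧ k ≠ j := exists_third i j
  have hcase := fin3_cases hij hki.symm hkj.symm
  obtain ⟨p, hp, hpm⟩ := hi
  obtain ⟨p', hp', hpm'⟩ := hj
  obtain ⟨x, hx, hx0⟩ : ∃ x ∈ cell τ w, x i - max (x j) (x k) = 0 := by
    have hc : Continuous fun s : ℝ =>
        (fun x : Fin 3 → ℝ => x i - max (x j) (x k)) (AffineMap.lineMap p p' s) := by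
      have : Continuous fun x : Fin 3 → ℝ => x i - max (x j) (x k) := by fun_prop
      exact this.comp AffineMap.lineMap_continuous
    have hz : (0 : ℝ) ∈ Set.Icc ((fun x : Fin 3 → ℝ => x i - max (x j) (x k))
        (AffineMap.lineMap p p' (1 : ℝ))) ((fun x : Fin 3 → ℝ => x i - max (x j) (x k))
        (AffineMap.lineMap p p' (0 : ℝ))) := by
      simp only [AffineMap.lineMap_apply_one, AffineMap.lineMap_apply_zero, Set.mem_Icc,
        sub_nonpos, sub_nonneg]
      exact ⟨le_max_of_le_left (hpm' i hij).le, max_le (hpm j hij.symm).le (hpm k hki).le⟩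
    obtain ⟨s, hs, hs0⟩ := intermediate_value_Icc' zero_le_one hc.continuousOn hz
    exact ⟨_, (cell_convex τ w).lineMap_mem hp hp' hs, hs0⟩
  rcases lt_trichotomy (x j) (x k) with h | h | h
  · rw [max_eq_right h.le] at hx0
    refine ⟨j, hij.symm, x, hx, ?_, ?_⟩
    · intro l hl
      rcases hcase l with rfl | rfl | rfl
      · linarith
      · exact absurd rfl hl
      · exact h
    · intro l l' hl hl'
      rcases hcase l with rfl | rfl | rfl <;> rcases hcase l' with rfl | rfl | rfl <;>
        first | rfl | exact absurd rfl hl | exact absurd rfl hl' | linarith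
  · rw [h, max_self] at hx0
    obtain ⟨δ, hδ, hr⟩ := cell_raise hx k
    refine ⟨k, hki, _, hr (-(δ / 2)) (by rw [abs_neg, abs_of_pos (by linarith)]; linarith),
      ?_, ?_⟩
    · intro l hl
      simp only [Function.update_self, Function.update_of_ne hl]
      rcases hcase l with rfl | rfl | rfl
      · linarith
      · linarith
      · exact absurd rfl hl
    · intro l l' hl hl'
      simp only [Function.update_of_ne hl, Function.update_of_ne hl']
      rcases hcase l with rfl | rfl | rfl <;> rcases hcase l' with rfl | rfl | rfl <;>
        first | rfl | exact absurd rfl hl | exact absurd rfl hl' | linarith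
  · rw [max_eq_left h.le] at hx0
    refine ⟨k, hki, x, hx, ?_, ?_⟩
    · intro l hl
      rcases hcase l with rfl | rfl | rfl
      · linarith
      · exact h
      · exact absurd rfl hl
    · intro l l' hl hl'
      rcases hcase l with rfl | rfl | rfl <;> rcases hcase l' with rfl | rfl | rfl <;>
        first | rfl | exact absurd rfl hl | exact absurd rfl hl' | linarith

/-- A word that can follow a tie of each of the three pairs of clocks can follow the
triple tie, by convexity of its cell. -/
lemma codes_of_all_afterTie {τ : Fin 3 → ℝ} {w : List (Fin 3)} (h : ∀ k, AfterTie τ w k) :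
    Codes τ τ w := by
  choose q hq h1 h2 using h
  -- translate so that the two equal coordinates vanish
  have e01 := h2 0 1 2 (by decide) (by decide)
  have e02 := h2 1 0 2 (by decide) (by decide)
  have e12 := h2 2 0 1 (by decide) (by decide)
  obtain ⟨a, ha⟩ : ∃ a, a = q 0 1 - q 0 0 := ⟨_, rfl⟩
  obtain ⟨b, hb⟩ : ∃ b, b = q 1 0 - q 1 1 := ⟨_, rfl⟩
  obtain ⟨c, hc⟩ : ∃ c, c = q 2 0 - q 2 2 := ⟨_, rfl⟩
  have ha0 : 0 < a := by linarith [h1 0 1 (by decide)]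
  have hb0 : 0 < b := by linarith [h1 1 0 (by decide)]
  have hc0 : 0 < c := by linarith [h1 2 0 (by decide)]
  have m0 := cell_translate (hq 0) (-(q 0 1))
  have m1 := cell_translate (hq 1) (-(q 1 0))
  have m2 := cell_translate (hq 2) (-(q 2 0))
  -- weights proportional to `1/a, 1/b, 1/c`
  have hS : 0 < b * c + a * c + a * b := by positivity
  have m := (cell_convex τ w).sum_mem (t := Finset.univ)
    (w := ![b * c / (b * c + a * c + a * b), a * c / (b * c + a * c + a * b),
      a * b / (b * c + a * c + a * b)])
    (z := ![fun i => q 0 i + -(q 0 1), fun i => q 1 i + -(q 1 0), fun i => q 2 i + -(q 2 0)])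
    (by intro i _; fin_cases i <;> simp <;> positivity)
    (by simp [Fin.sum_univ_three]; field_simp)
    (by intro i _; fin_cases i <;> simpa)
  have m' := cell_translate m (a * b * c / (b * c + a * c + a * b))
  have hz : (fun i => (∑ l, (![b * c / (b * c + a * c + a * b), a * c / (b * c + a * c + a * b),
      a * b / (b * c + a * c + a * b)] : Fin 3 → ℝ) l • (![fun i => q 0 i + -(q 0 1),
      fun i => q 1 i + -(q 1 0), fun i => q 2 i + -(q 2 0)] : Fin 3 → Fin 3 → ℝ) l) i
      + a * b * c / (b * c + a * c + a * b)) = 0 := by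
    have k0 : q 0 0 = q 0 1 - a := by linarith
    have k1 : q 1 1 = q 1 0 - b := by linarith
    have k2 : q 2 2 = q 2 0 - c := by linarith
    ext i
    fin_cases i <;> simp [Fin.sum_univ_three, k0, k1, k2, ← e01, ← e02, ← e12] <;>
      field_simp <;> ring
  rw [hz] at m'
  simpa using m'.2

/-- Words of length `n` that can be read right after a tie of the two clocks other than `k`. -/
def tieWords (τ : Fin 3 → ℝ) (n : ℕ) (k : Fin 3) : Set (List (Fin 3)) :=
  {w | w.length = n ∧ AfterTie τ w k}

lemma tieWords_finite (τ : Fin 3 → ℝ) (n : ℕ) (k : Fin 3) : (tieWords τ n k).Finite :=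
  (List.finite_length_eq (Fin 3) n).subset fun _ h => h.1

open Classical in
lemma card_leftExt {τ : Fin 3 → ℝ} {w : List (Fin 3)} (h : (cell τ w).Nonempty) :
    (Finset.univ.filter (LeftExt τ w)).card + (if ∀ k, AfterTie τ w k then 1 else 0) =
      1 + ∑ k, (if AfterTie τ w k then 1 else 0) := by
  have h0 := exists_leftExt h
  have h1 : ∀ i k, i ≠ k → AfterTie τ w k → LeftExt τ w i := fun i k hik h => h.leftExt hik
  have h2 : ∀ i j, i ≠ j → LeftExt τ w i → LeftExt τ w j → ∃ k, k ≠ i ∧ AfterTie τ w k :=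
    fun i j hij => exists_afterTie hij
  generalize LeftExt τ w = E at *
  generalize AfterTie τ w = A at *
  simp only [Finset.card_filter, Fin.sum_univ_three, Fin.forall_fin_succ, Fin.exists_fin_succ]
    at *
  by_cases e0 : E 0 <;> by_cases e1 : E 1 <;> by_cases e2 : E 2 <;>
  by_cases a0 : A 0 <;> by_cases a1 : A 1 <;> by_cases a2 : A 2 <;> simp_all

/-- Left-special words are exactly those following a tie, which turns the increment of the
complexity into a count of one-parameter families of words. The defect `ε` accounts for the
single word following the triple tie. -/
lemma ncard_lang_succ {τ : Fin 3 → ℝ} (hτ : ∀ i, 0 < τ i) (n : ℕ) :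
    ∃ ε ≤ 1, (lang τ (n + 1)).ncard + ε =
      (lang τ n).ncard + ∑ k, (tieWords τ n k).ncard := by
  classical
  set S := (lang_finite τ n).toFinset with hS
  have hp : (lang τ n).ncard = S.card := Set.ncard_eq_toFinset_card _ _
  have hp1 : (lang τ (n + 1)).ncard = ∑ w ∈ S, (Finset.univ.filter (LeftExt τ w)).card := by
    rw [Set.ncard_eq_toFinset_card _ (lang_finite τ (n + 1))]
    rw [Finset.card_eq_sum_card_fiberwise (f := List.tail) (t := S)]
    · refine Finset.sum_congr rfl fun w hw => ?_
      have hwl : w.length = n := by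
        rw [hS, Set.Finite.mem_toFinset] at hw; exact hw.1
      have : {v ∈ (lang_finite τ (n + 1)).toFinset | v.tail = w} =
          (Finset.univ.filter (LeftExt τ w)).image (fun i => i :: w) := by
        ext v
        simp only [Finset.mem_filter, Set.Finite.mem_toFinset, Finset.mem_image,
          Finset.mem_univ, true_and]
        constructor
        · rintro ⟨hv, rfl⟩
          cases v with
          | nil => exact absurd hv.1 (by simp)
          | cons i v => exact ⟨i, ((cons_mem_lang hτ).1 hv).2, rfl⟩
        · rintro ⟨i, hi, rfl⟩
          exact ⟨(cons_mem_lang hτ).2 ⟨hwl, hi⟩, rfl⟩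
      rw [this, Finset.card_image_of_injective]
      intro i j hij
      simpa using hij
    · intro v hv
      rw [Finset.mem_coe, Set.Finite.mem_toFinset] at hv
      rw [Finset.mem_coe, hS, Set.Finite.mem_toFinset]
      cases v with
      | nil => exact absurd hv.1 (by simp)
      | cons i v =>
        have h := (cons_mem_lang hτ).1 hv
        have := h.2.mem_lang
        rwa [h.1] at this
  have hF : ∀ k, (tieWords τ n k).ncard = ∑ w ∈ S, (if AfterTie τ w k then 1 else 0) := by
    intro k
    rw [← Finset.card_filter, Set.ncard_eq_toFinset_card _ (tieWords_finite τ n k)]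
    congr 1
    ext w
    simp only [Set.Finite.mem_toFinset, Finset.mem_filter, hS]
    constructor
    · rintro ⟨hl, ht⟩
      exact ⟨by simpa [hl] using ht.mem_lang, ht⟩
    · rintro ⟨hl, ht⟩
      exact ⟨hl.1, ht⟩
  refine ⟨∑ w ∈ S, (if ∀ k, AfterTie τ w k then 1 else 0), ?_, ?_⟩
  · rw [← Finset.card_filter, Finset.card_le_one]
    intro w hw w' hw'
    simp only [hS, Finset.mem_filter, Set.Finite.mem_toFinset] at hw hw'
    exact Codes.unique (hw.1.1.trans hw'.1.1.symm) (codes_of_all_afterTie hw.2)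
      (codes_of_all_afterTie hw'.2)
  · rw [hp1, hp, Finset.card_eq_sum_ones]
    simp only [hF]
    rw [Finset.sum_comm, ← Finset.sum_add_distrib, ← Finset.sum_add_distrib]
    refine Finset.sum_congr rfl fun w hw => ?_
    rw [hS, Set.Finite.mem_toFinset] at hw
    exact card_leftExt hw.2

/-! ### Counting the words that follow a tie -/

lemma interval_connect {ι : Type*} {F : Set ι} {I : ι → Set ℝ} (hop : ∀ w, IsOpen (I w))
    (hdisj : ∀ w ∈ F, ∀ w' ∈ F, ∀ y, y ∈ I w → y ∈ I w' → w = w')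
    {y y' : ℝ} (hyy : y ≤ y') (hcov : ∀ z ∈ Set.Icc y y', ∃ w ∈ F, z ∈ I w)
    {w w' : ι} (hw : w ∈ F) (hw' : w' ∈ F) (hy : y ∈ I w) (hy' : y' ∈ I w') : w = w' := by
  have hsub : Set.Icc y y' ⊆ I w := by
    refine isPreconnected_Icc.subset_left_of_subset_union (v := ⋃ v ∈ F \ {w}, I v) (hop w)
      (isOpen_biUnion fun v _ => hop v) ?_ ?_ ⟨y, ⟨le_rfl, hyy⟩, hy⟩
    · rw [Set.disjoint_left]
      intro z hz hz'
      simp only [Set.mem_iUnion] at hz'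
      obtain ⟨v, hv, hzv⟩ := hz'
      exact hv.2 (hdisj v hv.1 w hw z hzv hz)
    · intro z hz
      obtain ⟨v, hv, hzv⟩ := hcov z hz
      by_cases hvw : v = w
      · left; rwa [← hvw]
      · right
        simp only [Set.mem_iUnion]
        exact ⟨v, ⟨hv, hvw⟩, hzv⟩
  exact hdisj w hw w' hw' y' (hsub ⟨hyy, le_rfl⟩) hy'

/-- Removing a finite set `B` from an interval cuts it into about `B.ncard` open intervals. -/
lemma interval_count {ι : Type*} [Nonempty ι] {F : Set ι} {I : ι → Set ℝ} {T : ℝ} {B : Set ℝ}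
    (hF : F.Finite) (hB : B.Finite) (hBsub : B ⊆ Set.Ioo 0 T)
    (hop : ∀ w, IsOpen (I w)) (hcv : ∀ w, (I w).OrdConnected)
    (hdisj : ∀ w ∈ F, ∀ w' ∈ F, ∀ y, y ∈ I w → y ∈ I w' → w = w')
    (hne : ∀ w ∈ F, (I w).Nonempty)
    (hun : ∀ y, y ∈ Set.Ioo 0 T \ B ↔ ∃ w ∈ F, y ∈ I w) :
    B.ncard ≤ F.ncard ∧ F.ncard ≤ B.ncard + 1 := by
  constructor
  · have h1 : ∀ b ∈ B, ∃ w ∈ F, ∃ y < b, y ∈ I w ∧ ∀ c ∈ B, c < b → c < y := by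
      intro b hb
      have ho : IsOpen ((B \ {b})ᶜ ∩ Set.Ioi 0) :=
        (hB.sdiff).isClosed.isOpen_compl.inter isOpen_Ioi
      obtain ⟨ε, hε, hball⟩ := Metric.isOpen_iff.1 ho b ⟨by simp, (hBsub hb).1⟩
      have hin : ∀ z, b - ε < z → z < b → z ∉ B ∧ 0 < z := by
        intro z hz1 hz2
        have := hball (show z ∈ Metric.ball b ε by
          rw [Metric.mem_ball, Real.dist_eq, abs_lt]; constructor <;> linarith)
        exact ⟨fun hzB => this.1 ⟨hzB, by simpa using hz2.ne⟩, this.2⟩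
      obtain ⟨h2, h3⟩ := hin (b - ε / 2) (by linarith) (by linarith)
      obtain ⟨w, hw, hyw⟩ := (hun (b - ε / 2)).1
        ⟨⟨h3, by linarith [(hBsub hb).2]⟩, h2⟩
      refine ⟨w, hw, b - ε / 2, by linarith, hyw, fun c hc hcb => ?_⟩
      by_contra hlt
      exact (hin c (by linarith) hcb).1 hc
    choose! f hf y hyb hyI hlast using h1
    have key : ∀ b ∈ B, ∀ b' ∈ B, f b = f b' → ¬ b < b' := by
      intro b hb b' hb' heq hlt
      have h2 : b ∈ I (f b) := by
        refine (hcv (f b)).out (hyI b hb) (heq ▸ hyI b' hb') ⟨(hyb b hb).le, ?_⟩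
        exact (hlast b' hb' b hb hlt).le
      exact ((hun b).2 ⟨f b, hf b hb, h2⟩).2 hb
    refine Set.ncard_le_ncard_of_injOn f hf ?_ hF
    intro b hb b' hb' heq
    rcases lt_trichotomy b b' with h | h | h
    · exact absurd h (key b hb b' hb' heq)
    · exact h
    · exact absurd h (key b' hb' b hb heq.symm)
  · have h1 : ∀ w ∈ F, ∃ b ∈ insert T B, ∃ y ∈ I w, y < b ∧ ∀ c ∈ B, y < c → b ≤ c := by
      intro w hw
      obtain ⟨y, hy⟩ := hne w hw
      have hy' := ((hun y).2 ⟨w, hw, hy⟩)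
      obtain ⟨b, hb, hmin⟩ := Set.exists_min_image (insert T B ∩ Set.Ioi y) id
        ((hB.insert T).inter_of_left _) ⟨T, by simp, hy'.1.2⟩
      exact ⟨b, hb.1, y, hy, hb.2, fun c hc hyc => hmin c ⟨by simp [hc], hyc⟩⟩
    choose! f hf y hyI hyb hmin using h1
    have key : ∀ w ∈ F, ∀ w' ∈ F, f w = f w' → y w ≤ y w' → w = w' := by
      intro w hw w' hw' heq hle
      refine interval_connect hop hdisj hle ?_ hw hw' (hyI w hw) (hyI w' hw')
      intro z hz
      have a1 := (hun _).2 ⟨w, hw, hyI w hw⟩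
      have a2 := (hun _).2 ⟨w', hw', hyI w' hw'⟩
      refine (hun z).1 ⟨⟨a1.1.1.trans_le hz.1, hz.2.trans_lt a2.1.2⟩, fun hzB => ?_⟩
      have h3 : y w < z := lt_of_le_of_ne hz.1 fun h => a1.2 (h ▸ hzB)
      have h4 := hmin w hw z hzB h3
      have h5 := hyb w' hw'
      linarith [hz.2]
    refine (Set.ncard_le_ncard_of_injOn f hf ?_ (hB.insert T)).trans (Set.ncard_insert_le _ _)
    intro w hw w' hw' heq
    rcases le_total (y w) (y w') with h | h
    · exact key w hw w' hw' heq h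
    · exact (key w' hw' w hw heq.symm h).symm

/-- Just after a tie of the two clocks other than `k`, the state depends only on the next
ringing time `y` of clock `k`. -/
lemma afterTie_iff {τ : Fin 3 → ℝ} (hτ : ∀ i, 0 < τ i) {w : List (Fin 3)} {k : Fin 3} :
    AfterTie τ w k ↔ ∃ y ∈ Set.Ioo 0 (τ k), Codes τ (Function.update τ k y) w := by
  constructor
  · rintro ⟨q, hq, h1, h2⟩
    obtain ⟨i, hik, -⟩ := exists_third k k
    refine ⟨q k - q i + τ k, ⟨by linarith [hq.1 i k], by linarith [h1 i hik]⟩, ?_⟩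
    have := (cell_translate hq (-(q i))).2
    convert this using 1
    ext j
    by_cases hj : j = k
    · subst hj; simp; ring
    · simp [hj, h2 j i hj hik]
  · rintro ⟨y, ⟨hy0, hy1⟩, hc⟩
    refine ⟨Function.update 0 k (y - τ k), ⟨?_, ?_⟩, ?_, ?_⟩
    · intro i j
      by_cases hi : i = k <;> by_cases hj : j = k
      · subst hi; subst hj; simp; linarith
      · subst hi; simp [hj]; linarith [hτ j]
      · subst hj; simp [hi]; linarith
      · simp [hi, hj, hτ j]
    · convert hc using 1
      ext j
      by_cases hj : j = k
      · subst hj; simp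
      · simp [hj]
    · intro j hj
      simp [hj]; linarith
    · intro i j hi hj
      simp [hi, hj]

/-- Parameters `y` for which, after the tie of the two clocks other than `k`, another tie
occurs before `n` letters are read. -/
def breaks (τ : Fin 3 → ℝ) (k : Fin 3) (n : ℕ) : Set ℝ :=
  {y | y ∈ Set.Ioo 0 (τ k) ∧ ∃ t, HasTie τ (Function.update τ k y) t ∧
    ringsBefore τ (Function.update τ k y) t < n}

lemma tieWords_ncard {τ : Fin 3 → ℝ} (hτ : ∀ i, 0 < τ i) (k : Fin 3) (n : ℕ)
    (hfin : (breaks τ k n).Finite) :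
    (breaks τ k n).ncard ≤ (tieWords τ n k).ncard ∧
      (tieWords τ n k).ncard ≤ (breaks τ k n).ncard + 1 := by
  have hcont : Continuous fun y : ℝ => Function.update τ k y := by fun_prop
  have hset : ∀ w : List (Fin 3), {y : ℝ | Codes τ (Function.update τ k y) w}.OrdConnected := by
    intro w
    refine Convex.ordConnected ?_
    intro x hx y hy a b ha hb hab
    have := Codes.convex τ w hx hy ha hb hab
    have he : a • Function.update τ k x + b • Function.update τ k y =
        Function.update τ k (a • x + b • y) := by
      ext j
      by_cases hj : j = k
      · subst hj; simp
      · simp [hj, ← add_mul, hab]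
    rw [he] at this
    exact this
  refine interval_count (T := τ k)
    (I := fun w => Set.Ioo 0 (τ k) ∩ {y | Codes τ (Function.update τ k y) w})
    (tieWords_finite τ n k) hfin (fun y hy => hy.1)
    (fun w => isOpen_Ioo.inter ((Codes.isOpen τ w).preimage hcont))
    (fun w => Set.ordConnected_Ioo.inter (hset w)) ?_ ?_ ?_
  · intro w hw w' hw' y hy hy'
    exact Codes.unique (hw.1.trans hw'.1.symm) hy.2 hy'.2
  · intro w hw
    obtain ⟨y, hy, hc⟩ := (afterTie_iff hτ).1 hw.2
    exact ⟨y, hy, hc⟩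
  · intro y
    have h := exists_codes_iff hτ n (Function.update τ k y)
    constructor
    · rintro ⟨hy, hb⟩
      obtain ⟨w, hl, hc⟩ := h.2 (by
        intro t ht
        by_contra hlt
        exact hb ⟨hy, t, ht, not_le.1 hlt⟩)
      exact ⟨w, ⟨hl, (afterTie_iff hτ).2 ⟨y, hy, hc⟩⟩, hy, hc⟩
    · rintro ⟨w, hw, hy, hc⟩
      refine ⟨hy, ?_⟩
      rintro ⟨-, t, ht, hlt⟩
      exact absurd (h.1 ⟨w, hw.1, hc⟩ t ht) (not_le.2 hlt)

/-! ### Asymptotic number of breaks -/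

/-- Sublevel sets of a sequence at bounded distance from a linear one. -/
lemma sublevel_count {g : ℕ → ℕ} {σ K : ℝ} (hσ : 0 < σ)
    (hg : ∀ a, |(g a : ℝ) - (a + 1) * σ| ≤ K) :
    (∀ n : ℕ, {a | g a < n}.Finite) ∧
      ∃ K' : ℝ, ∀ n : ℕ, |(({a | g a < n}.ncard : ℕ) : ℝ) - n * (1 / σ)| ≤ K' := by
  have hK : 0 ≤ K := (abs_nonneg _).trans (hg 0)
  have hup : ∀ n : ℕ, {a | g a < n} ⊆ (Finset.range ⌈(n + K) / σ⌉₊ : Set ℕ) := by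
    intro n a ha
    have h1 := (abs_le.1 (hg a)).1
    have h2 : (g a : ℝ) < n := by exact_mod_cast ha
    simp only [Finset.coe_range, Set.mem_Iio]
    rw [Nat.lt_ceil, lt_div_iff₀ hσ]
    nlinarith
  have hlo : ∀ n : ℕ, (Finset.range (⌈(n - K) / σ⌉₊ - 1) : Set ℕ) ⊆ {a | g a < n} := by
    intro n a ha
    have h1 := (abs_le.1 (hg a)).2
    simp only [Finset.coe_range, Set.mem_Iio] at ha
    have h3 : a + 1 < ⌈(n - K) / σ⌉₊ := by omega
    rw [Nat.lt_ceil, lt_div_iff₀ hσ] at h3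
    push_cast at h3
    have : (g a : ℝ) < n := by linarith
    exact_mod_cast this
  refine ⟨fun n => (Finset.finite_toSet _).subset (hup n), K / σ + 1, fun n => ?_⟩
  have h1 := Set.ncard_le_ncard (hup n) (Finset.finite_toSet _)
  have h2 := Set.ncard_le_ncard (hlo n) ((Finset.finite_toSet _).subset (hup n))
  rw [Set.ncard_coe_finset, Finset.card_range] at h1 h2
  have h3 : (⌈(n + K) / σ⌉₊ : ℝ) < (n + K) / σ + 1 := Nat.ceil_lt_add_one (by positivity)
  have h4 : (n - K) / σ ≤ (⌈(n - K) / σ⌉₊ : ℝ) := Nat.le_ceil _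
  have h5 : (⌈(n - K) / σ⌉₊ : ℝ) ≤ ({a | g a < n}.ncard : ℝ) + 1 := by
    exact_mod_cast (by omega : ⌈(n - K) / σ⌉₊ ≤ {a | g a < n}.ncard + 1)
  have h6 : ({a | g a < n}.ncard : ℝ) ≤ ⌈(n + K) / σ⌉₊ := by exact_mod_cast h1
  have h7 : ((n : ℝ) + K) / σ = n / σ + K / σ := add_div _ _ _
  have h8 : ((n : ℝ) - K) / σ = n / σ - K / σ := sub_div _ _ _
  rw [abs_le, mul_one_div]
  constructor <;> linarith

/-- Total ringing frequency. -/
noncomputable def freq (τ : Fin 3 → ℝ) : ℝ := ∑ i, 1 / τ i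

lemma freq_pos {τ : Fin 3 → ℝ} (hτ : ∀ i, 0 < τ i) : 0 < freq τ :=
  Finset.sum_pos (fun i _ => one_div_pos.2 (hτ i)) Finset.univ_nonempty

lemma ringsBefore_approx {τ : Fin 3 → ℝ} (hτ : ∀ i, 0 < τ i) {k : Fin 3} {y t : ℝ}
    (hy : y ∈ Set.Ioo 0 (τ k)) (ht : 0 < t) :
    |(ringsBefore τ (Function.update τ k y) t : ℝ) - t * freq τ| ≤ 3 := by
  unfold ringsBefore freq
  push_cast
  rw [Finset.mul_sum, ← Finset.sum_sub_distrib]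
  refine (Finset.abs_sum_le_sum_abs _ _).trans ?_
  have : ∀ i ∈ (Finset.univ : Finset (Fin 3)),
      |(⌈(t - Function.update τ k y i) / τ i⌉₊ : ℝ) - t * (1 / τ i)| ≤ 1 := by
    intro i _
    have h1 : 0 ≤ Function.update τ k y i ∧ Function.update τ k y i ≤ τ i := by
      by_cases hi : i = k
      · subst hi; simpa using ⟨hy.1.le, hy.2.le⟩
      · simpa [hi] using (hτ i).le
    have h2 : (t - Function.update τ k y i) / τ i ≤ t / τ i :=
      div_le_div_of_nonneg_right (by linarith) (hτ i).le
    have h3 : t / τ i - 1 ≤ (t - Function.update τ k y i) / τ i := by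
      rw [← div_self (hτ i).ne', ← sub_div]
      exact div_le_div_of_nonneg_right (by linarith) (hτ i).le
    have h4 : 0 < t / τ i := div_pos ht (hτ i)
    have h5 := Nat.le_ceil ((t - Function.update τ k y i) / τ i)
    have h6 : (⌈(t - Function.update τ k y i) / τ i⌉₊ : ℝ) ≤ t / τ i + 1 := by
      refine le_trans ?_ (Nat.ceil_lt_add_one h4.le).le
      exact_mod_cast Nat.ceil_mono h2
    rw [mul_one_div, abs_le]
    constructor <;> linarith
  refine (Finset.sum_le_sum this).trans ?_
  simp

/-- The parameter `y ∈ (0, τ k)` for which the `(a + 1)`-st ring of clock `i` after the tie is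
simultaneous with a ring of clock `k`. -/
noncomputable def breakPt (τ : Fin 3 → ℝ) (k i : Fin 3) (a : ℕ) : ℝ :=
  (a + 1) * τ i - ⌊(a + 1) * τ i / τ k⌋₊ * τ k

/-- Pairwise incommensurability of the periods. -/
def Incomm (τ : Fin 3 → ℝ) : Prop :=
  ∀ i j, i ≠ j → ∀ a b : ℤ, a * τ i = b * τ j → a = 0

lemma breakPt_mem {τ : Fin 3 → ℝ} (hτ : ∀ i, 0 < τ i) (hirr : Incomm τ) {k i : Fin 3}
    (hik : i ≠ k) (a : ℕ) : breakPt τ k i a ∈ Set.Ioo 0 (τ k) := by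
  have h0 : 0 ≤ (a + 1) * τ i / τ k := by
    have := hτ i; have := hτ k; positivity
  have h1 := Nat.floor_le h0
  have h2 := Nat.lt_floor_add_one ((a + 1) * τ i / τ k)
  rw [le_div_iff₀ (hτ k)] at h1
  rw [div_lt_iff₀ (hτ k)] at h2
  unfold breakPt
  refine ⟨?_, by linarith⟩
  rcases h1.lt_or_eq with h | h
  · linarith
  · exfalso
    have h3 := hirr i k hik (a + 1) ⌊(a + 1) * τ i / τ k⌋₊ (by push_cast; exact h.symm)
    omega

lemma eq_of_modEq {T y y' : ℝ} (hy : y ∈ Set.Ioo 0 T) (hy' : y' ∈ Set.Ioo 0 T) {d : ℤ}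
    (h : y - y' = d * T) : y = y' := by
  have hT : 0 < T := hy.1.trans hy.2
  have h1 : (d : ℝ) < 1 := by
    by_contra hc
    nlinarith [hy.2, hy'.1]
  have h2 : (-1 : ℝ) < d := by
    by_contra hc
    nlinarith [hy.1, hy'.2]
  have h3 : d = 0 := by
    have : d < 1 := by exact_mod_cast h1
    have : -1 < d := by exact_mod_cast h2
    omega
  rw [h3] at h
  simp at h
  linarith

lemma breakPt_spec {τ : Fin 3 → ℝ} (hτ : ∀ i, 0 < τ i) (hirr : Incomm τ) {k i : Fin 3}
    (hik : i ≠ k) {a b : ℕ} {y : ℝ} (hy : y ∈ Set.Ioo 0 (τ k))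
    (h : (a + 1) * τ i = y + b * τ k) : y = breakPt τ k i a := by
  refine eq_of_modEq hy (breakPt_mem hτ hirr hik a)
    (d := (⌊(a + 1) * τ i / τ k⌋₊ : ℤ) - b) ?_
  unfold breakPt
  push_cast
  linarith

lemma breakPt_inj {τ : Fin 3 → ℝ} (hirr : Incomm τ) {k i : Fin 3} (hik : i ≠ k) :
    Function.Injective (breakPt τ k i) := by
  intro a a' h
  unfold breakPt at h
  have := hirr i k hik ((a : ℤ) - a') ((⌊(a + 1) * τ i / τ k⌋₊ : ℤ) - ⌊(a' + 1) * τ i / τ k⌋₊)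
    (by push_cast; linarith)
  omega

/-- Number of letters read before the tie that `breakPt τ k i a` produces. -/
noncomputable def breakPos (τ : Fin 3 → ℝ) (k i : Fin 3) (a : ℕ) : ℕ :=
  ringsBefore τ (Function.update τ k (breakPt τ k i a)) ((a + 1) * τ i)

lemma breakPos_approx {τ : Fin 3 → ℝ} (hτ : ∀ i, 0 < τ i) (hirr : Incomm τ) {k i : Fin 3}
    (hik : i ≠ k) (a : ℕ) : |(breakPos τ k i a : ℝ) - (a + 1) * (τ i * freq τ)| ≤ 3 := by
  have := ringsBefore_approx hτ (breakPt_mem hτ hirr hik a) (t := (a + 1) * τ i)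
    (by have := hτ i; positivity)
  rwa [mul_assoc] at this

lemma breaks_eq {τ : Fin 3 → ℝ} (hτ : ∀ i, 0 < τ i) (hirr : Incomm τ) {i j k : Fin 3}
    (hij : i ≠ j) (hik : i ≠ k) (hjk : j ≠ k) (n : ℕ) :
    breaks τ k n = breakPt τ k i '' {a | breakPos τ k i a < n} ∪
      breakPt τ k j '' {a | breakPos τ k j a < n} := by
  have hcase := fin3_cases hij hik hjk
  have h1 : ∀ l, l ≠ k → ∀ y ∈ Set.Ioo 0 (τ k), ∀ t, ∀ a b : ℕ,
      t = Function.update τ k y l + a * τ l → t = Function.update τ k y k + b * τ k →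
      ringsBefore τ (Function.update τ k y) t < n →
      y ∈ breakPt τ k l '' {a | breakPos τ k l a < n} := by
    intro l hl y hy t a b ha hb hlt
    rw [Function.update_of_ne hl] at ha
    rw [Function.update_self] at hb
    have ht : t = (a + 1) * τ l := by rw [ha]; ring
    have hyb := breakPt_spec hτ hirr hl hy (a := a) (b := b) (by rw [← ht, hb])
    refine ⟨a, ?_, hyb.symm⟩
    change ringsBefore _ _ _ < n
    rwa [← hyb, ← ht]
  have h2 : ∀ l, l ≠ k → breakPt τ k l '' {a | breakPos τ k l a < n} ⊆ breaks τ k n := by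
    rintro l hl _ ⟨a, ha, rfl⟩
    refine ⟨breakPt_mem hτ hirr hl a, (a + 1) * τ l, ⟨l, k, hl, ⟨a, ?_⟩,
      ⟨⌊(a + 1) * τ l / τ k⌋₊, ?_⟩⟩, ha⟩
    · rw [Function.update_of_ne hl]; ring
    · rw [Function.update_self, breakPt]; ring
  apply Set.Subset.antisymm
  · rintro y ⟨hy, t, ⟨l, l', hll, ⟨a, ha⟩, ⟨b, hb⟩⟩, hlt⟩
    have hmem : ∀ l, l ≠ k → ∀ a b : ℕ, t = Function.update τ k y l + a * τ l →
        t = Function.update τ k y k + b * τ k →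
        y ∈ breakPt τ k i '' {a | breakPos τ k i a < n} ∪
          breakPt τ k j '' {a | breakPos τ k j a < n} := by
      intro l hl a b ha hb
      have := h1 l hl y hy t a b ha hb hlt
      rcases hcase l with rfl | rfl | rfl
      · exact Or.inl this
      · exact Or.inr this
      · exact absurd rfl hl
    by_cases hl : l = k
    · subst hl
      exact hmem l' hll.symm b a hb ha
    · by_cases hl' : l' = k
      · subst hl'
        exact hmem l hl a b ha hb
      · exfalso
        rw [Function.update_of_ne hl] at ha
        rw [Function.update_of_ne hl'] at hb
        have := hirr l l' hll (a + 1) (b + 1) (by push_cast; linarith)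
        omega
  · exact Set.union_subset (h2 i hik) (h2 j hjk)

/-- `ρ` generates the group of integer relations between the periods, and involves all three
of them. -/
structure RelGen (τ : Fin 3 → ℝ) (ρ : Fin 3 → ℤ) : Prop where
  rel : ∑ i, ρ i * τ i = 0
  ne : ∀ i, ρ i ≠ 0
  gen : ∀ z : Fin 3 → ℤ, ∑ i, z i * τ i = 0 → ∃ r : ℤ, ∀ i, z i = r * ρ i

lemma sum_fin3 {i j k : Fin 3} (hij : i ≠ j) (hik : i ≠ k) (hjk : j ≠ k) (f : Fin 3 → ℝ) :
    ∑ l, f l = f i + f j + f k := by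
  have : (Finset.univ : Finset (Fin 3)) = {i, j, k} := by
    ext l; simpa using fin3_cases hij hik hjk l
  rw [this, Finset.sum_insert (by simp [hij, hik]), Finset.sum_pair hjk, add_assoc]

lemma breakPt_eq_iff {τ : Fin 3 → ℝ} (hτ : ∀ i, 0 < τ i) (hirr : Incomm τ) {ρ : Fin 3 → ℤ}
    (hρ : RelGen τ ρ) {i j k : Fin 3} (hij : i ≠ j) (hik : i ≠ k) (hjk : j ≠ k) (a c : ℕ) :
    breakPt τ k i a = breakPt τ k j c ↔
      ∃ r : ℤ, (a : ℤ) + 1 = r * ρ i ∧ -((c : ℤ) + 1) = r * ρ j := by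
  constructor
  · intro h
    unfold breakPt at h
    obtain ⟨d, hd⟩ : ∃ d : ℤ, (a + 1) * τ i - (c + 1) * τ j + d * τ k = 0 :=
      ⟨(⌊(c + 1) * τ j / τ k⌋₊ : ℤ) - ⌊(a + 1) * τ i / τ k⌋₊, by push_cast; linarith⟩
    obtain ⟨r, hr⟩ := hρ.gen (fun l => if l = i then a + 1 else if l = j then -(c + 1) else d) (by
      rw [sum_fin3 hij hik hjk]
      simp only [if_true, hij.symm, hik.symm, hjk.symm, if_false]
      push_cast
      linarith)
    refine ⟨r, ?_, ?_⟩
    · simpa using hr i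
    · simpa [hij.symm] using hr j
  · rintro ⟨r, h1, h2⟩
    have h1' : (a : ℝ) + 1 = r * ρ i := by exact_mod_cast h1
    have h2' : -((c : ℝ) + 1) = r * ρ j := by exact_mod_cast h2
    have h3 := hρ.rel
    rw [sum_fin3 hij hik hjk] at h3
    refine eq_of_modEq (breakPt_mem hτ hirr hik a) (breakPt_mem hτ hirr hjk c)
      (d := -r * ρ k + ⌊(c + 1) * τ j / τ k⌋₊ - ⌊(a + 1) * τ i / τ k⌋₊) ?_
    have h4 : (r : ℝ) * (ρ i * τ i + ρ j * τ j + ρ k * τ k) = 0 := by rw [h3, mul_zero]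
    have h5 : ((a : ℝ) + 1) * τ i - (c + 1) * τ j + r * ρ k * τ k = 0 := by
      rw [h1', show ((c : ℝ) + 1) = -(r * ρ j) by linarith]
      linarith
    unfold breakPt
    push_cast
    linarith

/-- Common breaks of the two families: none if `ρ i` and `ρ j` have the same sign, and a
sequence of positive density, strictly less than `1`, if the signs differ. -/
lemma common_breaks {τ : Fin 3 → ℝ} (hτ : ∀ i, 0 < τ i) (hirr : Incomm τ) {ρ : Fin 3 → ℤ}
    (hρ : RelGen τ ρ) {i j k : Fin 3} (hij : i ≠ j) (hik : i ≠ k) (hjk : j ≠ k) :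
    ∃ L K : ℝ, (∀ n : ℕ, |(((breakPt τ k i '' {a | breakPos τ k i a < n} ∩
      breakPt τ k j '' {a | breakPos τ k j a < n}).ncard : ℕ) : ℝ) - n * L| ≤ K) ∧
      (0 < ρ i * ρ j → L = 0) ∧ (ρ i * ρ j < 0 → 0 < L ∧ L < 1) := by
  rcases lt_or_gt_of_ne (mul_ne_zero (hρ.ne i) (hρ.ne j)) with hs | hs
  · set P := (ρ i).natAbs with hP
    set Q := (ρ j).natAbs with hQ
    have hP0 : 0 < P := Int.natAbs_pos.2 (hρ.ne i)
    have hQ0 : 0 < Q := Int.natAbs_pos.2 (hρ.ne j)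
    -- the common breaks are indexed by the positive multiples of `(P, Q)`
    have hiff : ∀ a c : ℕ, breakPt τ k i a = breakPt τ k j c ↔
        ∃ r : ℕ, a + 1 = (r + 1) * P ∧ c + 1 = (r + 1) * Q := by
      intro a c
      rw [breakPt_eq_iff hτ hirr hρ hij hik hjk]
      constructor
      · rintro ⟨r, h1, h2⟩
        have h1' : a + 1 = r.natAbs * P := by
          rw [hP, ← Int.natAbs_mul, ← h1]; omega
        have h2' : c + 1 = r.natAbs * Q := by
          rw [hQ, ← Int.natAbs_mul, ← h2]; omega
        have hr : r.natAbs ≠ 0 := by rintro h; simp [h] at h1'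
        refine ⟨r.natAbs - 1, ?_, ?_⟩
        · rw [Nat.sub_add_cancel (by omega)]; exact h1'
        · rw [Nat.sub_add_cancel (by omega)]; exact h2'
      · rintro ⟨r, h1, h2⟩
        have h1' : (a : ℤ) + 1 = (r + 1) * P := by exact_mod_cast h1
        have h2' : (c : ℤ) + 1 = (r + 1) * Q := by exact_mod_cast h2
        rcases lt_or_gt_of_ne (hρ.ne i) with hi | hi
        · have hj : 0 < ρ j := by nlinarith [hρ.ne j]
          refine ⟨-(r + 1), ?_, ?_⟩
          · rw [h1', hP, Int.ofNat_natAbs_of_nonpos hi.le]; ring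
          · rw [h2', hQ, Int.natAbs_of_nonneg hj.le]; ring
        · have hj : ρ j < 0 := by nlinarith [hρ.ne j]
          refine ⟨r + 1, ?_, ?_⟩
          · rw [h1', hP, Int.natAbs_of_nonneg hi.le]
          · rw [h2', hQ, Int.ofNat_natAbs_of_nonpos hj.le]; ring
    obtain ⟨g, hg⟩ : ∃ g : ℕ → ℕ, ∀ r, g r = max (breakPos τ k i ((r + 1) * P - 1))
      (breakPos τ k j ((r + 1) * Q - 1)) := ⟨_, fun _ => rfl⟩
    have hPr : ∀ r : ℕ, (r + 1) * P - 1 + 1 = (r + 1) * P := fun r =>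
      Nat.sub_add_cancel (Nat.mul_pos (by omega) hP0)
    have hQr : ∀ r : ℕ, (r + 1) * Q - 1 + 1 = (r + 1) * Q := fun r =>
      Nat.sub_add_cancel (Nat.mul_pos (by omega) hQ0)
    have himg : ∀ n : ℕ, breakPt τ k i '' {a | breakPos τ k i a < n} ∩
        breakPt τ k j '' {a | breakPos τ k j a < n} =
        (fun r => breakPt τ k i ((r + 1) * P - 1)) '' {r | g r < n} := by
      intro n
      ext y
      constructor
      · rintro ⟨⟨a, ha, rfl⟩, ⟨c, hc, hca⟩⟩
        obtain ⟨r, h1, h2⟩ := (hiff a c).1 hca.symm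
        have e1 : a = (r + 1) * P - 1 := by omega
        have e2 : c = (r + 1) * Q - 1 := by omega
        refine ⟨r, ?_, congrArg (breakPt τ k i) e1.symm⟩
        simp only [Set.mem_ofPred_eq, hg, max_lt_iff, ← e1, ← e2]
        exact ⟨ha, hc⟩
      · rintro ⟨r, hr, rfl⟩
        simp only [Set.mem_ofPred_eq, hg, max_lt_iff] at hr
        exact ⟨⟨_, hr.1, rfl⟩, ⟨_, hr.2, ((hiff _ _).2 ⟨r, hPr r, hQr r⟩).symm⟩⟩
    have hinj : Function.Injective fun r => breakPt τ k i ((r + 1) * P - 1) := by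
      intro r r' h
      have h1 := breakPt_inj hirr hik h
      have h2 : (r + 1) * P = (r' + 1) * P := by rw [← hPr r, ← hPr r', h1]
      have := Nat.eq_of_mul_eq_mul_right hP0 h2
      omega
    set σ := max (P * (τ i * freq τ)) (Q * (τ j * freq τ)) with hσ
    have hτf : 1 < τ i * freq τ := by
      rw [freq, sum_fin3 hij hik hjk]
      have h1 := one_div_pos.2 (hτ j)
      have h2 := one_div_pos.2 (hτ k)
      have h3 : τ i * (1 / τ i) = 1 := mul_one_div_cancel (hτ i).ne'
      nlinarith [hτ i, mul_pos (hτ i) h1, mul_pos (hτ i) h2]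
    have hσ1 : 1 < σ := by
      refine lt_of_lt_of_le ?_ (le_max_left _ _)
      have : (1 : ℝ) ≤ P := by exact_mod_cast hP0
      nlinarith
    have happ : ∀ r, |(g r : ℝ) - (r + 1) * σ| ≤ 3 := by
      intro r
      have h1 := breakPos_approx hτ hirr hik ((r + 1) * P - 1)
      have h2 := breakPos_approx hτ hirr hjk ((r + 1) * Q - 1)
      have e1 : (((r + 1) * P - 1 : ℕ) : ℝ) + 1 = (r + 1) * P := by exact_mod_cast hPr r
      have e2 : (((r + 1) * Q - 1 : ℕ) : ℝ) + 1 = (r + 1) * Q := by exact_mod_cast hQr r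
      rw [e1, mul_assoc] at h1
      rw [e2, mul_assoc] at h2
      rw [hg, hσ, mul_max_of_nonneg _ _ (by positivity), Nat.cast_max]
      refine (abs_max_sub_max_le_max _ _ _ _).trans (max_le h1 h2)
    obtain ⟨-, K, hK⟩ := sublevel_count (by linarith) happ
    refine ⟨1 / σ, K, fun n => ?_, fun h => absurd h (by omega), fun _ => ⟨by positivity, ?_⟩⟩
    · rw [himg, Set.ncard_image_of_injective _ hinj]
      exact hK n
    · rw [div_lt_one (by linarith)]; exact hσ1
  · refine ⟨0, 0, fun n => ?_, fun _ => rfl, fun h => absurd h (by omega)⟩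
    have : breakPt τ k i '' {a | breakPos τ k i a < n} ∩
        breakPt τ k j '' {a | breakPos τ k j a < n} = ∅ := by
      rw [Set.eq_empty_iff_forall_notMem]
      rintro y ⟨⟨a, -, rfl⟩, ⟨c, -, hc⟩⟩
      obtain ⟨r, h1, h2⟩ := (breakPt_eq_iff hτ hirr hρ hij hik hjk a c).1 hc.symm
      have h3 : 0 < ((a : ℤ) + 1) * (c + 1) := by positivity
      have h4 : ((a : ℤ) + 1) * (c + 1) = -(r ^ 2 * (ρ i * ρ j)) := by
        rw [h1, show ((c : ℤ) + 1) = -(r * ρ j) by linarith]; ring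
      nlinarith [mul_nonneg (sq_nonneg r) hs.le]
    rw [this]; simp

/-- The two families of breaks have densities `1 / (τ i * freq τ)` and `1 / (τ j * freq τ)`; the
correction `L` is the density of the breaks they share. -/
lemma tieWords_asymp {τ : Fin 3 → ℝ} (hτ : ∀ i, 0 < τ i) (hirr : Incomm τ) {ρ : Fin 3 → ℤ}
    (hρ : RelGen τ ρ) {i j k : Fin 3} (hij : i ≠ j) (hik : i ≠ k) (hjk : j ≠ k) :
    ∃ L K : ℝ, (∀ n : ℕ, |((tieWords τ n k).ncard : ℝ) -
      n * (1 / (τ i * freq τ) + 1 / (τ j * freq τ) - L)| ≤ K) ∧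
      (0 < ρ i * ρ j → L = 0) ∧ (ρ i * ρ j < 0 → 0 < L ∧ L < 1) := by
  obtain ⟨L, K, hL, hL0, hL1⟩ := common_breaks hτ hirr hρ hij hik hjk
  have hf := freq_pos hτ
  obtain ⟨fi, Ki, hKi⟩ := sublevel_count (mul_pos (hτ i) hf) (breakPos_approx hτ hirr hik)
  obtain ⟨fj, Kj, hKj⟩ := sublevel_count (mul_pos (hτ j) hf) (breakPos_approx hτ hirr hjk)
  refine ⟨L, K + Ki + Kj + 1, fun n => ?_, hL0, hL1⟩
  have hb := breaks_eq hτ hirr hij hik hjk n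
  have hfin : (breaks τ k n).Finite := by
    rw [hb]; exact ((fi n).image _).union ((fj n).image _)
  obtain ⟨h1, h2⟩ := tieWords_ncard hτ k n hfin
  have h3 := Set.ncard_union_add_ncard_inter (breakPt τ k i '' {a | breakPos τ k i a < n})
    (breakPt τ k j '' {a | breakPos τ k j a < n}) ((fi n).image _) ((fj n).image _)
  rw [← hb, Set.ncard_image_of_injective _ (breakPt_inj hirr hik),
    Set.ncard_image_of_injective _ (breakPt_inj hirr hjk)] at h3
  have h3' := congrArg (Nat.cast (R := ℝ)) h3
  push_cast at h3'
  have h1' : ((breaks τ k n).ncard : ℝ) ≤ (tieWords τ n k).ncard := by exact_mod_cast h1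
  have h2' : ((tieWords τ n k).ncard : ℝ) ≤ (breaks τ k n).ncard + 1 := by exact_mod_cast h2
  have a1 := abs_le.1 (hL n)
  have a2 := abs_le.1 (hKi n)
  have a3 := abs_le.1 (hKj n)
  rw [abs_le]
  constructor
  · linarith [a1.1, a1.2, a2.1, a2.2, a3.1, a3.2]
  · linarith [a1.1, a1.2, a2.1, a2.2, a3.1, a3.2]

/-! ### Kronecker's theorem in dimension two -/

open UnitAddTorus in
lemma mFourier_apply_add (m : Fin 2 → ℤ) (x y : UnitAddTorus (Fin 2)) :
    mFourier m (x + y) = mFourier m x * mFourier m y := by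
  simp only [mFourier, ContinuousMap.coe_mk, ← Finset.prod_mul_distrib]
  refine Finset.prod_congr rfl fun i _ => ?_
  simp [fourier_apply, smul_add, AddCircle.toCircle_add]

open UnitAddTorus in
lemma mFourier_apply_nsmul (m : Fin 2 → ℤ) (x : UnitAddTorus (Fin 2)) (n : ℕ) :
    mFourier m (n • x) = mFourier m x ^ n := by
  induction n with
  | zero => simp [mFourier]
  | succ n ih => rw [succ_nsmul, mFourier_apply_add, ih, pow_succ]

open UnitAddTorus in
lemma mFourier_norm_apply (m : Fin 2 → ℤ) (x : UnitAddTorus (Fin 2)) : ‖mFourier m x‖ = 1 := by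
  simp [mFourier, fourier_apply, Circle.norm_coe]

open MeasureTheory UnitAddTorus in
lemma torus_volume_univ : (volume : Measure (UnitAddTorus (Fin 2))).real Set.univ = 1 := by
  have : IsProbabilityMeasure (volume : Measure UnitAddCircle) := ⟨UnitAddCircle.measure_univ⟩
  have : IsProbabilityMeasure (volume : Measure (UnitAddTorus (Fin 2))) :=
    inferInstanceAs (IsProbabilityMeasure (Measure.pi fun _ : Fin 2 =>
      (volume : Measure UnitAddCircle)))
  exact probReal_univ

open MeasureTheory UnitAddTorus in
/-- Weyl's criterion: orbit averages of trigonometric polynomials converge to the mean. -/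
lemma weyl_average {x : UnitAddTorus (Fin 2)} (hx : ∀ m : Fin 2 → ℤ, m ≠ 0 → mFourier m x ≠ 1)
    {f : C(UnitAddTorus (Fin 2), ℂ)}
    (hf : f ∈ Submodule.span ℂ (Set.range (mFourier (d := Fin 2)))) :
    Tendsto (fun N : ℕ => (N : ℂ)⁻¹ * ∑ n ∈ Finset.range N, f (n • x)) atTop (𝓝 (∫ t, f t)) := by
  have hintg : ∀ g : C(UnitAddTorus (Fin 2), ℂ), Integrable (fun t => g t) := fun g =>
    g.continuous.integrable_of_hasCompactSupport (HasCompactSupport.of_compactSpace _)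
  induction hf using Submodule.span_induction with
  | mem f hf =>
    obtain ⟨m, rfl⟩ := hf
    by_cases hm : m = 0
    · subst hm
      have h1 : (∫ t, mFourier (0 : Fin 2 → ℤ) t) = 1 := by simp [mFourier_zero, torus_volume_univ]
      rw [h1]
      refine Tendsto.congr' ?_ tendsto_const_nhds
      filter_upwards [eventually_ge_atTop 1] with N hN
      have : (N : ℂ) ≠ 0 := by exact_mod_cast (by omega : N ≠ 0)
      simp [mFourier_zero, this]
    · have h1 := hx m hm
      have h0 : (∫ t, mFourier m t) = 0 := by
        have h2 := integral_add_right_eq_self (μ := volume) (fun t => mFourier m t) x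
        simp only [mFourier_apply_add, integral_mul_const] at h2
        have h3 : (∫ t, mFourier m t) * (mFourier m x - 1) = 0 := by rw [mul_sub, h2]; ring
        exact (mul_eq_zero.1 h3).resolve_right (sub_ne_zero.2 h1)
      rw [h0]
      have hb : ∀ N : ℕ, ‖(N : ℂ)⁻¹ * ∑ n ∈ Finset.range N, mFourier m (n • x)‖ ≤
          (N : ℝ)⁻¹ * (2 / ‖mFourier m x - 1‖) := by
        intro N
        rw [norm_mul, norm_inv, Complex.norm_natCast]
        gcongr
        simp only [mFourier_apply_nsmul]
        rw [geom_sum_eq h1, norm_div]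
        gcongr
        refine (norm_sub_le _ _).trans ?_
        rw [norm_pow, mFourier_norm_apply]
        norm_num
      refine squeeze_zero_norm hb ?_
      simpa using (tendsto_inv_atTop_nhds_zero_nat (𝕜 := ℝ)).mul_const (2 / ‖mFourier m x - 1‖)
  | zero => simp
  | add f g _ _ hf hg =>
    simp only [ContinuousMap.add_apply, Finset.sum_add_distrib, mul_add]
    rw [integral_add (hintg f) (hintg g)]
    exact hf.add hg
  | smul c f _ hf =>
    simp only [ContinuousMap.smul_apply, smul_eq_mul, ← Finset.mul_sum, mul_left_comm _ c]
    rw [integral_const_mul]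
    exact hf.const_mul c

open MeasureTheory UnitAddTorus in
/-- If the orbit avoided `U`, the averages of a bump function supported in `U` would vanish,
while its integral is positive. -/
lemma torus_orbit_meets {x : UnitAddTorus (Fin 2)}
    (hx : ∀ m : Fin 2 → ℤ, m ≠ 0 → mFourier m x ≠ 1)
    {U : Set (UnitAddTorus (Fin 2))} (hU : IsOpen U) (hne : U.Nonempty) : ∃ n : ℕ, n • x ∈ U := by
  by_contra! hcon
  obtain ⟨y, hy⟩ := hne
  obtain ⟨f, hf0, hf1, hf⟩ := exists_continuous_zero_one_of_isClosed hU.isClosed_compl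
    (isClosed_singleton (x := y)) (by simpa using hy)
  have hcs : HasCompactSupport f := HasCompactSupport.of_compactSpace _
  have hpos : 0 < ∫ t, f t := by
    refine f.continuous.integral_pos_of_hasCompactSupport_nonneg_nonzero hcs
      (fun t => (hf t).1) (x := y) ?_
    rw [hf1 (Set.mem_singleton y)]; simp
  set c := ∫ t, f t with hc
  -- the complex-valued bump function, approximated by a trigonometric polynomial
  obtain ⟨g, hg⟩ : ∃ g : C(UnitAddTorus (Fin 2), ℂ), ∀ t, g t = (f t : ℂ) :=
    ⟨⟨fun t => (f t : ℂ), by fun_prop⟩, fun _ => rfl⟩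
  have hgint : ∫ t, g t = (c : ℂ) := by
    simp only [hg]; exact integral_ofReal
  have hmem : g ∈ closure
      ((Submodule.span ℂ (Set.range (mFourier (d := Fin 2)))) : Set C(UnitAddTorus (Fin 2), ℂ)) := by
    have := span_mFourier_closure_eq_top (d := Fin 2)
    have h2 : g ∈ (Submodule.span ℂ (Set.range (mFourier (d := Fin 2)))).topologicalClosure := by
      rw [this]; trivial
    exact h2
  obtain ⟨P, hP, hPg⟩ := Metric.mem_closure_iff.1 hmem (c / 4) (by positivity)
  have hd : ∀ t, ‖g t - P t‖ ≤ c / 4 := fun t => by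
    rw [← dist_eq_norm]; exact (ContinuousMap.dist_apply_le_dist t).trans hPg.le
  have hintg : ∀ g : C(UnitAddTorus (Fin 2), ℂ), Integrable (fun t => g t) := fun g =>
    g.continuous.integrable_of_hasCompactSupport (HasCompactSupport.of_compactSpace _)
  have h1 : ‖(∫ t, g t) - ∫ t, P t‖ ≤ c / 4 := by
    rw [← integral_sub (hintg g) (hintg P)]
    refine (norm_integral_le_of_norm_le_const (Eventually.of_forall hd)).trans ?_
    rw [torus_volume_univ, mul_one]
  have h2 : ‖∫ t, P t‖ ≤ c / 4 := by
    refine le_of_tendsto (weyl_average hx hP).norm (Eventually.of_forall fun N => ?_)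
    have h3 : ‖∑ n ∈ Finset.range N, P (n • x)‖ ≤ ∑ n ∈ Finset.range N, c / 4 := by
      refine norm_sum_le_of_le _ fun n _ => ?_
      have := hd (n • x)
      rw [hg, hf0 (hcon n)] at this
      simpa using this
    rw [norm_mul, norm_inv, Complex.norm_natCast]
    rw [Finset.sum_const, Finset.card_range, nsmul_eq_mul] at h3
    rcases Nat.eq_zero_or_pos N with rfl | hN
    · simp; positivity
    · have : (0 : ℝ) < N := by exact_mod_cast hN
      rw [inv_mul_le_iff₀ this]; exact h3
  have h3 : ‖∫ t, g t‖ = c := by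
    rw [hgint, Complex.norm_real, Real.norm_of_nonneg hpos.le]
  have h4 := norm_sub_norm_le (∫ t, g t) (∫ t, P t)
  linarith

open UnitAddTorus in
/-- Kronecker's theorem for two numbers independent of `1` over the rationals. -/
lemma kronecker_two {α β : ℝ} (h : ∀ a b c : ℤ, (a : ℝ) + b * α + c * β = 0 → b = 0 ∧ c = 0)
    (f g : ℝ) {ε : ℝ} (hε : 0 < ε) :
    ∃ (n : ℕ) (p q : ℤ), |n * α - p - f| < ε ∧ |n * β - q - g| < ε := by
  set x : UnitAddTorus (Fin 2) := ![(α : UnitAddCircle), (β : UnitAddCircle)] with hxdef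
  have hx : ∀ m : Fin 2 → ℤ, m ≠ 0 → mFourier m x ≠ 1 := by
    intro m hm h1
    have h2 : mFourier m x = AddCircle.toCircle (T := (1 : ℝ))
        ((m 0 * α + m 1 * β : ℝ) : UnitAddCircle) := by
      simp only [mFourier, ContinuousMap.coe_mk, Fin.prod_univ_two, fourier_apply, hxdef]
      rw [← Circle.coe_mul, ← AddCircle.toCircle_add]
      congr 2
      simp
    rw [h2] at h1
    have h3 : AddCircle.toCircle (T := (1 : ℝ)) ((m 0 * α + m 1 * β : ℝ) : UnitAddCircle) =
        AddCircle.toCircle (T := (1 : ℝ)) 0 := by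
      rw [AddCircle.toCircle_zero]; exact Circle.ext h1
    have h4 := AddCircle.injective_toCircle one_ne_zero h3
    rw [AddCircle.coe_eq_zero_iff] at h4
    obtain ⟨a, ha⟩ := h4
    have h5 := h (-a) (m 0) (m 1) (by push_cast; simp at ha; linarith)
    exact hm (by ext i; fin_cases i <;> simp [h5.1, h5.2])
  set U : Set (UnitAddTorus (Fin 2)) :=
    {y | ‖y 0 - (f : UnitAddCircle)‖ < ε ∧ ‖y 1 - (g : UnitAddCircle)‖ < ε} with hUdef
  have hU : IsOpen U := by
    refine IsOpen.inter ?_ ?_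
    · exact isOpen_lt ((continuous_apply (0 : Fin 2)).sub continuous_const).norm continuous_const
    · exact isOpen_lt ((continuous_apply (1 : Fin 2)).sub continuous_const).norm continuous_const
  obtain ⟨n, hn⟩ := torus_orbit_meets hx hU ⟨![(f : UnitAddCircle), (g : UnitAddCircle)], by
    simp [hUdef, hε]⟩
  have key : ∀ a b : ℝ, ‖(n • (a : UnitAddCircle)) - (b : UnitAddCircle)‖ < ε →
      ∃ p : ℤ, |n * a - p - b| < ε := by
    intro a b hab
    have e : (n • (a : UnitAddCircle)) - (b : UnitAddCircle) = ((n * a - b : ℝ) : UnitAddCircle) := by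
      simp
    rw [e, UnitAddCircle.norm_eq] at hab
    exact ⟨round (n * a - b), by convert hab using 2; ring⟩
  obtain ⟨p, hp⟩ := key α f (by simpa [hxdef] using hn.1)
  obtain ⟨q, hq⟩ := key β g (by simpa [hxdef] using hn.2)
  exact ⟨n, p, q, hp, hq⟩

/-! ### Billiard words as clock words -/

/-- The time between two consecutive crossings of the same family of faces. -/
noncomputable def period (ω : Fin 3 → ℝ) : Fin 3 → ℝ := fun i => 1 / ω i

/-- The first time after `s` at which coordinate `i` of `m + tω` is an integer. -/
noncomputable def nextRing (m ω : Fin 3 → ℝ) (s : ℝ) (i : Fin 3) : ℝ :=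
  (⌊m i + s * ω i⌋ + 1 - m i) / ω i

lemma period_pos {ω : Fin 3 → ℝ} (hω : ∀ i, 0 < ω i) (i : Fin 3) : 0 < period ω i :=
  one_div_pos.2 (hω i)

lemma lt_nextRing {ω : Fin 3 → ℝ} (hω : ∀ i, 0 < ω i) (m : Fin 3 → ℝ) (s : ℝ) (i : Fin 3) :
    s < nextRing m ω s i := by
  rw [nextRing, lt_div_iff₀ (hω i)]
  linarith [Int.lt_floor_add_one (m i + s * ω i)]

lemma nextRing_sub_le {ω : Fin 3 → ℝ} (hω : ∀ i, 0 < ω i) (m : Fin 3 → ℝ) (s : ℝ) (i : Fin 3) :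
    nextRing m ω s i - period ω i ≤ s := by
  rw [nextRing, period, ← sub_div, div_le_iff₀ (hω i)]
  linarith [Int.floor_le (m i + s * ω i)]

lemma crossingAt_nextRing {ω : Fin 3 → ℝ} (hω : ∀ i, 0 < ω i) (m : Fin 3 → ℝ) (s : ℝ)
    (i : Fin 3) : crossingAt m ω (nextRing m ω s i) i :=
  ⟨⌊m i + s * ω i⌋ + 1, by
    rw [nextRing, div_mul_cancel₀ _ (hω i).ne']; push_cast; ring⟩

lemma nextRing_le {ω : Fin 3 → ℝ} (hω : ∀ i, 0 < ω i) {m : Fin 3 → ℝ} {s r : ℝ} {i : Fin 3}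
    (hsr : s < r) (h : crossingAt m ω r i) : nextRing m ω s i ≤ r := by
  obtain ⟨k, hk⟩ := h
  rw [nextRing, div_le_iff₀ (hω i)]
  have h1 : ⌊m i + s * ω i⌋ < k := by
    rw [Int.floor_lt, ← hk]
    have := mul_lt_mul_of_pos_right hsr (hω i)
    linarith
  have h2 : ((⌊m i + s * ω i⌋ : ℤ) : ℝ) + 1 ≤ k := by exact_mod_cast h1
  linarith

lemma nextRing_of_crossingAt {ω : Fin 3 → ℝ} (hω : ∀ i, 0 < ω i) {m : Fin 3 → ℝ} {r : ℝ}
    {i : Fin 3} (h : crossingAt m ω r i) : nextRing m ω r i = r + period ω i := by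
  obtain ⟨k, hk⟩ := h
  rw [nextRing, period, hk, Int.floor_intCast, ← hk]
  have := (hω i).ne'
  field_simp
  ring

/-- From any time `s` on, the cutting sequence is the clock word of the state consisting of the
next crossing times. -/
lemma codes_of_cutting {ω : Fin 3 → ℝ} (hω : ∀ i, 0 < ω i) {m : Fin 3 → ℝ}
    (hm : Admissible m ω) {u : ℕ → Fin 3} {t : ℕ → ℝ} (ht : StrictMono t) (ht0 : ∀ n, 0 < t n)
    (hcr : ∀ s : ℝ, 0 < s → ((∃ i, crossingAt m ω s i) ↔ ∃ n, t n = s))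
    (hu : ∀ n, crossingAt m ω (t n) (u n)) (n : ℕ) :
    ∀ (k : ℕ) (s : ℝ), 0 ≤ s → (∀ l, s < t l ↔ k ≤ l) →
      Codes (period ω) (nextRing m ω s) (List.ofFn fun j : Fin n => u (k + j)) := by
  induction n with
  | zero => intro k s _ _; simp [Codes]
  | succ n ih =>
    intro k s hs hk
    have hidx : ∀ j, ∃ l, k ≤ l ∧ t l = nextRing m ω s j := by
      intro j
      have h1 := lt_nextRing hω m s j
      obtain ⟨l, hl⟩ := (hcr _ (hs.trans_lt h1)).1 ⟨j, crossingAt_nextRing hω m s j⟩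
      exact ⟨l, (hk l).1 (hl ▸ h1), hl⟩
    have hsk : s < t k := (hk k).2 le_rfl
    have hi : nextRing m ω s (u k) = t k := by
      obtain ⟨l, hl, hl'⟩ := hidx (u k)
      refine le_antisymm (nextRing_le hω hsk (hu k)) ?_
      rw [← hl']; exact ht.monotone hl
    have hj : ∀ j, j ≠ u k → t k < nextRing m ω s j := by
      intro j hj
      obtain ⟨l, hl, hl'⟩ := hidx j
      rw [← hl']
      refine ht (lt_of_le_of_ne hl ?_)
      rintro rfl
      refine hj (hm (t k) (ht0 k) j (u k) ?_ (hu k))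
      rw [hl']; exact crossingAt_nextRing hω m s j
    have hb : bump (period ω) (nextRing m ω s) (u k) = nextRing m ω (t k) := by
      ext j
      by_cases h : j = u k
      · rw [h, bump_self, hi, nextRing_of_crossingAt hω (hu k)]
      · rw [bump_of_ne _ _ h]
        refine le_antisymm ?_ ?_
        · exact nextRing_le hω (hsk.trans (lt_nextRing hω m (t k) j))
            (crossingAt_nextRing hω m (t k) j)
        · exact nextRing_le hω (hj j h) (crossingAt_nextRing hω m s j)
    rw [List.ofFn_succ]
    refine ⟨fun j h => ?_, ?_⟩
    · simpa [hi] using hj j h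
    · have h1 := ih (k + 1) (t k) (ht0 k).le fun l => by rw [ht.lt_iff_lt]; omega
      have h2 : (fun j : Fin n => u (k + ((Fin.succ j : Fin (n + 1)) : ℕ))) =
          fun j : Fin n => u (k + 1 + j) := by
        ext j
        rw [Fin.val_succ, show k + ((j : ℕ) + 1) = k + 1 + j by ring]
      rw [h2]
      simpa [hb] using h1

/-- The set of length-`n` factors of an infinite word, as lists. -/
def factors (u : ℕ → Fin 3) (n : ℕ) : Set (List (Fin 3)) :=
  {w | ∃ k : ℕ, w = List.ofFn fun j : Fin n => u (k + j)}

lemma complexity_eq (u : ℕ → Fin 3) (n : ℕ) : complexity u n = (factors u n).ncard := by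
  rw [complexity, ← Set.ncard_image_of_injective _ (List.ofFn_injective (n := n))]
  congr 1
  ext w
  constructor
  · rintro ⟨f, ⟨k, hk⟩, rfl⟩
    exact ⟨k, congrArg List.ofFn (funext hk)⟩
  · rintro ⟨k, rfl⟩
    exact ⟨_, ⟨k, fun _ => rfl⟩, rfl⟩

lemma factors_subset_lang {ω : Fin 3 → ℝ} (hω : ∀ i, 0 < ω i) {m : Fin 3 → ℝ}
    (hm : Admissible m ω) {u : ℕ → Fin 3} (hu : IsCuttingSeq m ω u) (n : ℕ) :
    factors u n ⊆ lang (period ω) n := by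
  obtain ⟨t, ht, ht0, hcr, hut⟩ := hu
  rintro w ⟨k, rfl⟩
  obtain ⟨s, hs0, hs⟩ : ∃ s : ℝ, 0 ≤ s ∧ ∀ l, s < t l ↔ k ≤ l := by
    rcases k with _ | k
    · exact ⟨0, le_rfl, fun l => by simp [ht0 l]⟩
    · exact ⟨t k, (ht0 k).le, fun l => by rw [ht.lt_iff_lt]; omega⟩
  refine ⟨by simp, fun i => nextRing m ω s i - period ω i, fun i j => ?_, ?_⟩
  · have h1 := nextRing_sub_le hω m s i
    have h2 := lt_nextRing hω m s j
    simp only [sub_add_cancel]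
    linarith
  · have h := codes_of_cutting hω hm ht ht0 hcr hut n k s hs0 hs
    convert h using 1
    ext i
    simp

lemma crossings_finite {ω : Fin 3 → ℝ} (hω : ∀ i, 0 < ω i) (m : Fin 3 → ℝ) (r : ℝ) :
    {s : ℝ | 0 < s ∧ s < r ∧ ∃ i, crossingAt m ω s i}.Finite := by
  have : {s : ℝ | 0 < s ∧ s < r ∧ ∃ i, crossingAt m ω s i} ⊆
      ⋃ i : Fin 3, (fun k : ℤ => ((k : ℝ) - m i) / ω i) ''
        (Set.Icc ⌊m i⌋ ⌈m i + r * ω i⌉) := by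
    rintro s ⟨h0, hr, i, k, hk⟩
    refine Set.mem_iUnion.2 ⟨i, k, ⟨?_, ?_⟩, ?_⟩
    · have : ((⌊m i⌋ : ℤ) : ℝ) ≤ k := by
        rw [← hk]
        have := mul_pos h0 (hω i)
        linarith [Int.floor_le (m i)]
      exact_mod_cast this
    · have : (k : ℝ) ≤ ((⌈m i + r * ω i⌉ : ℤ) : ℝ) := by
        rw [← hk]
        have := mul_lt_mul_of_pos_right hr (hω i)
        linarith [Int.le_ceil (m i + r * ω i)]
      exact_mod_cast this
    · change ((k : ℝ) - m i) / ω i = s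
      rw [← hk, add_sub_cancel_left, mul_div_cancel_right₀ _ (hω i).ne']
  exact (Set.finite_iUnion fun i => (Set.finite_Icc _ _).image _).subset this

/-- The crossing times are enumerated by iterating the map sending `s` to the first crossing after
`s`; none is missed because only finitely many crossings precede a given time. -/
lemma exists_cuttingSeq {ω : Fin 3 → ℝ} (hω : ∀ i, 0 < ω i) (m : Fin 3 → ℝ) :
    ∃ u, IsCuttingSeq m ω u := by
  choose c hc using fun s : ℝ => exists_min (nextRing m ω s)
  obtain ⟨G, hG⟩ : ∃ G : ℝ → ℝ, ∀ s, G s = nextRing m ω s (c s) := ⟨_, fun _ => rfl⟩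
  have hlt : ∀ s, s < G s := fun s => by rw [hG]; exact lt_nextRing hω m s _
  have hle : ∀ s r i, s < r → crossingAt m ω r i → G s ≤ r := fun s r i hsr hr => by
    rw [hG]; exact (hc s i).trans (nextRing_le hω hsr hr)
  have hst : ∀ n, G^[n + 1] 0 = G (G^[n] 0) := fun n => Function.iterate_succ_apply' G n 0
  have hmono : StrictMono fun n => G^[n] 0 := strictMono_nat_of_lt_succ fun n => by
    rw [hst]; exact hlt _
  have hpos : ∀ n, 0 < G^[n + 1] 0 := fun n => by
    have := hmono (Nat.succ_pos n)
    simpa using this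
  have hcross : ∀ n, crossingAt m ω (G^[n + 1] 0) (c (G^[n] 0)) := fun n => by
    rw [hst, hG]; exact crossingAt_nextRing hω m _ _
  refine ⟨fun n => c (G^[n] 0), fun n => G^[n + 1] 0,
    fun a b hab => hmono (Nat.succ_lt_succ hab), hpos, fun s hs => ⟨?_, ?_⟩, hcross⟩
  · rintro ⟨i, hi⟩
    by_contra! hne
    -- otherwise the infinitely many times `G^[n + 1] 0` are all crossings before `s`
    have hb : ∀ n, G^[n] 0 < s := by
      intro n
      induction n with
      | zero => simpa using hs
      | succ n ih =>
        refine lt_of_le_of_ne ?_ (hne n)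
        rw [hst]; exact hle _ _ i ih hi
    refine Set.infinite_range_of_injective
      (f := fun n => G^[n + 1] 0) (fun a b hab => Nat.succ_injective (hmono.injective hab))
      ((crossings_finite hω m s).subset ?_)
    rintro _ ⟨n, rfl⟩
    exact ⟨hpos n, hb (n + 1), _, hcross n⟩
  · rintro ⟨n, rfl⟩
    exact ⟨_, hcross n⟩

/-- By Kronecker's theorem, the ray from the origin comes close to any configuration of clocks. -/
lemma exists_time {ω : Fin 3 → ℝ} (hω : ∀ i, 0 < ω i)
    (hind : ∀ a b c : ℤ, (a : ℝ) + b * (ω 1 / ω 0) + c * (ω 2 / ω 0) = 0 → b = 0 ∧ c = 0)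
    {q : Fin 3 → ℝ} {s₀ : ℝ} (h1 : ∀ i, q i < s₀) (h2 : ∀ i, s₀ < q i + period ω i)
    {ε : ℝ} (hε : 0 < ε) :
    ∃ s : ℝ, 0 ≤ s ∧ ∀ i, |nextRing 0 ω s i - period ω i - s - (q i - s₀)| < ε := by
  obtain ⟨φ, hφ⟩ : ∃ φ : Fin 3 → ℝ, ∀ i, φ i = (s₀ - q i) * ω i := ⟨_, fun _ => rfl⟩
  have hφ0 : ∀ i, 0 < φ i := fun i => by
    rw [hφ]; exact mul_pos (sub_pos.2 (h1 i)) (hω i)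
  have hφ1 : ∀ i, φ i < 1 := fun i => by
    have := h2 i
    rw [period] at this
    rw [hφ, ← lt_div_iff₀ (hω i)]; linarith
  obtain ⟨η, hη, hηle⟩ : ∃ η > 0, ∀ i, η ≤ min (ε * ω i) (min (φ i) (1 - φ i)) := by
    obtain ⟨i, hi⟩ := Finite.exists_min fun i => min (ε * ω i) (min (φ i) (1 - φ i))
    exact ⟨_, lt_min (mul_pos hε (hω i)) (lt_min (hφ0 i) (sub_pos.2 (hφ1 i))), hi⟩
  set δ := s₀ - q 0 with hδ
  obtain ⟨N, p, r, hp, hr⟩ := kronecker_two hind (φ 1 - δ * ω 1) (φ 2 - δ * ω 2) hη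
  have hδ0 : 0 < δ := sub_pos.2 (h1 0)
  set s := N / ω 0 + δ with hs
  have hs0 : 0 ≤ s := by have := (hω 0).le; positivity
  refine ⟨s, hs0, ?_⟩
  have key : ∀ (i : Fin 3) (z : ℤ), |s * ω i - z - φ i| < η →
      |nextRing 0 ω s i - period ω i - s - (q i - s₀)| < ε := by
    intro i z hz
    have hm := hηle i
    rw [le_min_iff, le_min_iff] at hm
    have hz' := abs_lt.1 hz
    have hfl : ⌊s * ω i⌋ = z := by
      rw [Int.floor_eq_iff]; constructor <;> linarith
    have e : nextRing 0 ω s i - period ω i - s - (q i - s₀) = -((s * ω i - z - φ i) / ω i) := by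
      have := (hω i).ne'
      simp only [nextRing, period, Pi.zero_apply, zero_add, hfl, hφ]
      field_simp
      ring
    rw [e, abs_neg, abs_div, abs_of_pos (hω i), div_lt_iff₀ (hω i)]
    linarith
  have hω0 := (hω 0).ne'
  intro i
  fin_cases i
  · refine key 0 N ?_
    have : s * ω 0 - (N : ℤ) - φ 0 = 0 := by
      rw [hs, hφ, ← hδ]; push_cast; field_simp; ring
    rw [this]; simpa using hη
  · refine key 1 p ?_
    convert hp using 2
    rw [hs]; field_simp; ring
  · refine key 2 r ?_
    convert hr using 2
    rw [hs]; field_simp; ring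

lemma lang_subset_factors {ω : Fin 3 → ℝ} (hω : ∀ i, 0 < ω i)
    (hind : ∀ a b c : ℤ, (a : ℝ) + b * (ω 1 / ω 0) + c * (ω 2 / ω 0) = 0 → b = 0 ∧ c = 0)
    (hm : Admissible 0 ω) {u : ℕ → Fin 3} (hu : IsCuttingSeq 0 ω u) (n : ℕ) :
    lang (period ω) n ⊆ factors u n := by
  obtain ⟨t, ht, ht0, hcr, hut⟩ := hu
  rintro w ⟨hlen, q, hq⟩
  obtain ⟨s₀, hs1, hs2⟩ : ∃ s₀ : ℝ, (∀ i, q i < s₀) ∧ ∀ i, s₀ < q i + period ω i := by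
    obtain ⟨i, hi⟩ := Finite.exists_max q
    obtain ⟨j, hj⟩ := Finite.exists_min fun j => q j + period ω j
    obtain ⟨s₀, h1, h2⟩ := exists_between (hq.1 i j)
    exact ⟨s₀, fun l => (hi l).trans_lt h1, fun l => h2.trans_le (hj l)⟩
  obtain ⟨ε, hε, hpert⟩ := cell_perturb hq
  obtain ⟨s, hs, happ⟩ := exists_time hω hind hs1 hs2 hε
  have h1 : (fun i => nextRing 0 ω s i - period ω i - s + s₀) ∈ cell (period ω) w := by
    refine hpert _ fun i => ?_
    convert happ i using 2
    ring
  have h2 := (cell_translate h1 (s - s₀)).2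
  have h3 : Codes (period ω) (nextRing 0 ω s) w := by
    convert h2 using 1
    ext i
    simp
  have hex : ∃ l, s < t l := by
    have h := lt_nextRing hω 0 s 0
    obtain ⟨l, hl⟩ := (hcr _ (hs.trans_lt h)).1 ⟨0, crossingAt_nextRing hω 0 s 0⟩
    exact ⟨l, hl ▸ h⟩
  classical
  refine ⟨Nat.find hex, Codes.unique (by simp [hlen]) h3
    (codes_of_cutting hω hm ht ht0 hcr hut n _ s hs fun l => ⟨Nat.find_min' hex, fun h => ?_⟩)⟩
  exact (Nat.find_spec hex).trans_le (ht.monotone h)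

/-- The supremum defining `pDir` is attained at the origin, where every word of the language
appears. -/
lemma pDir_eq {ω : Fin 3 → ℝ} (hω : ∀ i, 0 < ω i)
    (hind : ∀ a b c : ℤ, (a : ℝ) + b * (ω 1 / ω 0) + c * (ω 2 / ω 0) = 0 → b = 0 ∧ c = 0)
    (hm : Admissible 0 ω) (n : ℕ) : pDir ω n = (lang (period ω) n).ncard := by
  obtain ⟨u, hu⟩ := exists_cuttingSeq hω 0
  refine IsGreatest.csSup_eq ⟨⟨0, u, hm, hu, ?_⟩, ?_⟩
  · rw [complexity_eq]
    congr 1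
    exact (lang_subset_factors hω hind hm hu n).antisymm (factors_subset_lang hω hm hu n)
  · rintro c ⟨m, v, hmv, hv, rfl⟩
    rw [complexity_eq]
    exact Set.ncard_le_ncard (factors_subset_lang hω hmv hv n) (lang_finite _ n)

/-! ### Integer relations and the quadratic asymptotics -/

lemma rel_zero {τ : Fin 3 → ℝ} (hirr : Incomm τ) {z : Fin 3 → ℤ}
    (hz : ∑ i, (z i : ℝ) * τ i = 0) {k : Fin 3} (hk : z k = 0) : z = 0 := by
  obtain ⟨i, hik, -⟩ := exists_third k k
  obtain ⟨j, hjk, hji⟩ := exists_third k i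
  rw [sum_fin3 hji.symm hik hjk, hk] at hz
  have h1 : z i = 0 := hirr i j hji.symm (z i) (-z j) (by push_cast at hz ⊢; linarith)
  have h2 : z j = 0 := hirr j i hji (z j) (-z i) (by push_cast at hz ⊢; linarith)
  ext l
  rcases fin3_cases hji.symm hik hjk l with rfl | rfl | rfl <;> assumption

/-- The relations among three pairwise incommensurable but dependent periods form an infinite
cyclic group: a relation is determined by its first coordinate. -/
lemma exists_relGen {τ : Fin 3 → ℝ} (hirr : Incomm τ) {z : Fin 3 → ℤ}
    (hz : ∑ i, (z i : ℝ) * τ i = 0) (hz0 : z ≠ 0) : ∃ ρ, RelGen τ ρ := by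
  let R : AddSubgroup (Fin 3 → ℤ) :=
    { carrier := {y | ∑ i, (y i : ℝ) * τ i = 0}
      zero_mem' := by simp
      add_mem' := by
        intro a b ha hb
        change ∑ i, ((a + b) i : ℝ) * τ i = 0
        have ha' : ∑ i, (a i : ℝ) * τ i = 0 := ha
        have hb' : ∑ i, (b i : ℝ) * τ i = 0 := hb
        simp [add_mul, Finset.sum_add_distrib, ha', hb']
      neg_mem' := by
        intro a ha
        change ∑ i, ((-a) i : ℝ) * τ i = 0
        have ha' : ∑ i, (a i : ℝ) * τ i = 0 := ha
        simp [ha'] }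
  have hR : ∀ y, y ∈ R ↔ ∑ i, (y i : ℝ) * τ i = 0 := fun y => Iff.rfl
  obtain ⟨g, hg⟩ := Int.subgroup_cyclic (R.map (Pi.evalAddMonoidHom (fun _ : Fin 3 => ℤ) 0))
  rw [← AddSubgroup.zmultiples_eq_closure] at hg
  have hgm : g ∈ R.map (Pi.evalAddMonoidHom (fun _ : Fin 3 => ℤ) 0) := by
    rw [hg]; exact AddSubgroup.mem_zmultiples g
  obtain ⟨ρ, hρ, hρg⟩ := hgm
  have hρg' : ρ 0 = g := hρg
  have hgen : ∀ y ∈ R, ∃ r : ℤ, y = r • ρ := by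
    intro y hy
    have h1 : y 0 ∈ R.map (Pi.evalAddMonoidHom (fun _ : Fin 3 => ℤ) 0) := ⟨y, hy, rfl⟩
    rw [hg, AddSubgroup.mem_zmultiples_iff] at h1
    obtain ⟨r, hr⟩ := h1
    refine ⟨r, sub_eq_zero.1 ?_⟩
    refine rel_zero hirr ((hR _).1 (R.sub_mem hy (R.zsmul_mem hρ r))) (k := 0) ?_
    simp [hρg', ← hr]
  refine ⟨ρ, (hR ρ).1 hρ, fun i hi => hz0 ?_, fun y hy => ?_⟩
  · have h0 := rel_zero hirr ((hR ρ).1 hρ) hi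
    obtain ⟨r, hr⟩ := hgen z hz
    rw [hr, h0, smul_zero]
  · obtain ⟨r, hr⟩ := hgen y hy
    exact ⟨r, fun i => by rw [hr]; simp⟩

lemma tendsto_of_linear_increments {p : ℕ → ℕ} {κ K : ℝ}
    (h : ∀ n : ℕ, |(p (n + 1) : ℝ) - p n - n * κ| ≤ K) :
    Tendsto (fun n : ℕ => (p n : ℝ) / (n : ℝ) ^ 2) atTop (𝓝 (κ / 2)) := by
  have hK : 0 ≤ K := (abs_nonneg _).trans (h 0)
  set M := K + |κ| / 2 with hM
  have hM0 : 0 ≤ M := by positivity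
  have hD : ∀ n : ℕ, |(p n : ℝ) - κ / 2 * n ^ 2| ≤ p 0 + M * n := by
    intro n
    induction n with
    | zero => simp
    | succ n ih =>
      have h1 := abs_le.1 (h n)
      have h2 := abs_le.1 ih
      have h3 := neg_abs_le κ
      have h4 := le_abs_self κ
      push_cast
      rw [abs_le]
      constructor <;> nlinarith [h1.1, h1.2, h2.1, h2.2]
  rw [tendsto_iff_norm_sub_tendsto_zero]
  refine squeeze_zero' (Eventually.of_forall fun _ => norm_nonneg _)
    (g := fun n : ℕ => (p 0 + M) / n) ?_ (tendsto_const_div_atTop_nhds_zero_nat _)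
  filter_upwards [eventually_ge_atTop 1] with n hn
  have hn1 : (1 : ℝ) ≤ n := by exact_mod_cast hn
  have hn0 : (0 : ℝ) < n := by linarith
  have e : (p n : ℝ) / n ^ 2 - κ / 2 = (p n - κ / 2 * n ^ 2) / n ^ 2 := by
    field_simp
  rw [e, Real.norm_eq_abs, abs_div, abs_of_pos (by positivity : (0 : ℝ) < (n : ℝ) ^ 2),
    div_le_div_iff₀ (by positivity) hn0]
  have h5 := hD n
  have h6 : (p 0 : ℝ) + M * n ≤ (p 0 + M) * n := by
    have : (0 : ℝ) ≤ p 0 := Nat.cast_nonneg _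
    nlinarith
  calc |(p n : ℝ) - κ / 2 * n ^ 2| * n ≤ ((p 0 + M) * n) * n := by gcongr; linarith
    _ = (p 0 + M) * n ^ 2 := by ring

/-- Exactly two of the three pairs of coefficients of a generating relation have opposite signs. -/
lemma sign_split {τ : Fin 3 → ℝ} (hτ : ∀ i, 0 < τ i) {ρ : Fin 3 → ℤ} (hρ : RelGen τ ρ) :
    (0 < ρ 0 * ρ 1 ∧ ρ 0 * ρ 2 < 0 ∧ ρ 1 * ρ 2 < 0) ∨
    (ρ 0 * ρ 1 < 0 ∧ 0 < ρ 0 * ρ 2 ∧ ρ 1 * ρ 2 < 0) ∨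
    (ρ 0 * ρ 1 < 0 ∧ ρ 0 * ρ 2 < 0 ∧ 0 < ρ 1 * ρ 2) := by
  have hr := hρ.rel
  rw [Fin.sum_univ_three] at hr
  have key : ∀ i : Fin 3, (0 < ρ i → 0 < (ρ i : ℝ) * τ i) ∧ (ρ i < 0 → (ρ i : ℝ) * τ i < 0) :=
    fun i => ⟨fun h => mul_pos (by exact_mod_cast h) (hτ i),
      fun h => mul_neg_of_neg_of_pos (by exact_mod_cast h) (hτ i)⟩
  rcases lt_or_gt_of_ne (hρ.ne 0) with h0 | h0 <;> rcases lt_or_gt_of_ne (hρ.ne 1) with h1 | h1 <;>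
    rcases lt_or_gt_of_ne (hρ.ne 2) with h2 | h2
  · exfalso; linarith [(key 0).2 h0, (key 1).2 h1, (key 2).2 h2]
  · exact Or.inl ⟨mul_pos_of_neg_of_neg h0 h1, mul_neg_of_neg_of_pos h0 h2,
      mul_neg_of_neg_of_pos h1 h2⟩
  · exact Or.inr (Or.inl ⟨mul_neg_of_neg_of_pos h0 h1, mul_pos_of_neg_of_neg h0 h2,
      mul_neg_of_pos_of_neg h1 h2⟩)
  · exact Or.inr (Or.inr ⟨mul_neg_of_neg_of_pos h0 h1, mul_neg_of_neg_of_pos h0 h2,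
      mul_pos h1 h2⟩)
  · exact Or.inr (Or.inr ⟨mul_neg_of_pos_of_neg h0 h1, mul_neg_of_pos_of_neg h0 h2,
      mul_pos_of_neg_of_neg h1 h2⟩)
  · exact Or.inr (Or.inl ⟨mul_neg_of_pos_of_neg h0 h1, mul_pos h0 h2,
      mul_neg_of_neg_of_pos h1 h2⟩)
  · exact Or.inl ⟨mul_pos h0 h1, mul_neg_of_pos_of_neg h0 h2, mul_neg_of_pos_of_neg h1 h2⟩
  · exfalso; linarith [(key 0).1 h0, (key 1).1 h1, (key 2).1 h2]

lemma lang_asymp {τ : Fin 3 → ℝ} (hτ : ∀ i, 0 < τ i) (hirr : Incomm τ) {ρ : Fin 3 → ℤ}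
    (hρ : RelGen τ ρ) : ∃ C : ℝ, C ∈ Set.Ioo (0 : ℝ) 1 ∧
      Tendsto (fun n : ℕ => ((lang τ n).ncard : ℝ) / (n : ℝ) ^ 2) atTop (𝓝 C) := by
  obtain ⟨L0, K0, h0, z0, n0⟩ := tieWords_asymp hτ hirr hρ
    (i := 1) (j := 2) (k := 0) (by decide) (by decide) (by decide)
  obtain ⟨L1, K1, h1, z1, n1⟩ := tieWords_asymp hτ hirr hρ
    (i := 0) (j := 2) (k := 1) (by decide) (by decide) (by decide)
  obtain ⟨L2, K2, h2, z2, n2⟩ := tieWords_asymp hτ hirr hρ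
    (i := 0) (j := 1) (k := 2) (by decide) (by decide) (by decide)
  have hsum : 1 / (τ 0 * freq τ) + 1 / (τ 1 * freq τ) + 1 / (τ 2 * freq τ) = 1 := by
    have hf := (freq_pos hτ).ne'
    have e : freq τ = 1 / τ 0 + 1 / τ 1 + 1 / τ 2 := by rw [freq, Fin.sum_univ_three]
    rw [← one_div_mul_one_div, ← one_div_mul_one_div, ← one_div_mul_one_div, ← add_mul, ← add_mul,
      ← e, mul_one_div_cancel hf]
  have hL : 0 < L0 + L1 + L2 ∧ L0 + L1 + L2 < 2 := by
    rcases sign_split hτ hρ with ⟨a, b, c⟩ | ⟨a, b, c⟩ | ⟨a, b, c⟩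
    · have := z2 a; have := n1 b; have := n0 c
      constructor <;> linarith
    · have := n2 a; have := z1 b; have := n0 c
      constructor <;> linarith
    · have := n2 a; have := n1 b; have := z0 c
      constructor <;> linarith
  refine ⟨(2 - (L0 + L1 + L2)) / 2, ⟨by linarith, by linarith⟩,
    tendsto_of_linear_increments (K := K0 + K1 + K2 + 1) fun n => ?_⟩
  obtain ⟨ε, hε, he⟩ := ncard_lang_succ hτ n
  rw [Fin.sum_univ_three] at he
  have he' := congrArg (Nat.cast (R := ℝ)) he
  push_cast at he'
  have hε' : (ε : ℝ) ≤ 1 := by exact_mod_cast hε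
  have hε0 : (0 : ℝ) ≤ ε := Nat.cast_nonneg _
  have a0 := abs_le.1 (h0 n)
  have a1 := abs_le.1 (h1 n)
  have a2 := abs_le.1 (h2 n)
  have hs : (n : ℝ) * (2 - (L0 + L1 + L2)) =
      n * (1 / (τ 1 * freq τ) + 1 / (τ 2 * freq τ) - L0) +
      n * (1 / (τ 0 * freq τ) + 1 / (τ 2 * freq τ) - L1) +
      n * (1 / (τ 0 * freq τ) + 1 / (τ 1 * freq τ) - L2) := by
    linear_combination (-2 * n : ℝ) * hsum
  rw [hs, abs_le]
  constructor <;> linarith [a0.1, a0.2, a1.1, a1.2, a2.1, a2.2]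

/-- Case (4): if `1, α, β` are linearly independent over `ℚ` while `1, α⁻¹, β⁻¹`
are linearly dependent over `ℚ`, then `p(n, ω) ∼ C n²` for some `C ∈ (0, 1)`. -/
theorem stmt3 (ω : Fin 3 → ℝ) (hpos : ∀ i, 0 < ω i)
    (hindep : LinearIndependent ℚ ![(1 : ℝ), ω 1 / ω 0, ω 2 / ω 0])
    (hdep : ¬ LinearIndependent ℚ ![(1 : ℝ), (ω 1 / ω 0)⁻¹, (ω 2 / ω 0)⁻¹]) :
    ∃ C : ℝ, C ∈ Set.Ioo (0 : ℝ) 1 ∧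
      Tendsto (fun n : ℕ => (pDir ω n : ℝ) / (n : ℝ) ^ 2) atTop (𝓝 C) := by
  rw [← LinearIndependent.iff_fractionRing ℤ ℚ, Fintype.linearIndependent_iff] at hindep hdep
  simp only [Fin.sum_univ_three, zsmul_eq_mul, Matrix.cons_val] at hindep hdep
  have hω0 := (hpos 0).ne'
  have hω1 := (hpos 1).ne'
  have hω2 := (hpos 2).ne'
  have hintg : ∀ z : Fin 3 → ℤ, ∑ i, (z i : ℝ) * ω i = 0 → ∀ i, z i = 0 := by
    intro z hz
    refine hindep z ?_
    rw [Fin.sum_univ_three] at hz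
    field_simp
    linarith
  have hpair : ∀ i j : Fin 3, i ≠ j → ∀ a b : ℤ, (a : ℝ) * ω i = b * ω j → a = 0 := by
    intro i j hij a b h
    have h1 := hintg (Pi.single i a - Pi.single j b) (by
      simp only [Pi.sub_apply, Int.cast_sub, sub_mul, Finset.sum_sub_distrib]
      rw [Finset.sum_eq_single i (by intro l _ hl; simp [hl]) (by simp),
        Finset.sum_eq_single j (by intro l _ hl; simp [hl]) (by simp)]
      simp [h]) i
    simpa [hij] using h1
  have hirr : Incomm (period ω) := by
    intro i j hij a b h
    refine hpair j i hij.symm a b ?_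
    have hi := (hpos i).ne'
    have hj := (hpos j).ne'
    simp only [period] at h
    field_simp at h
    linarith
  have hadm : Admissible 0 ω := by
    rintro t ht i j ⟨k, hk⟩ ⟨l, hl⟩
    by_contra hij
    simp only [Pi.zero_apply, zero_add] at hk hl
    have h1 := hpair j i (Ne.symm hij) k l (by rw [← hk, ← hl]; ring)
    rw [h1, Int.cast_zero] at hk
    exact (mul_pos ht (hpos i)).ne' hk
  have hind : ∀ a b c : ℤ, (a : ℝ) + b * (ω 1 / ω 0) + c * (ω 2 / ω 0) = 0 → b = 0 ∧ c = 0 := by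
    intro a b c h
    have h1 := hindep ![a, b, c] (by simpa using h)
    exact ⟨h1 1, h1 2⟩
  push Not at hdep
  obtain ⟨z, hz, i, hi⟩ := hdep
  have hrel : ∑ i, (z i : ℝ) * period ω i = 0 := by
    rw [Fin.sum_univ_three]
    simp only [period]
    field_simp at hz ⊢
    linarith
  obtain ⟨ρ, hρ⟩ := exists_relGen hirr hrel (fun h => hi (by rw [h]; rfl))
  simp only [pDir_eq hpos hind hadm]
  exact lang_asymp (period_pos hpos) hirr hρ
end
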